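/- arXiv:1512.01968 — 2 statements merged into one kernel-verified Lean document; each statement's English description precedes it below -/
import Mathlib

section
/- Fix f : X × Y → {0,1} on finite sets X, Y and a (not necessarily normalized) product measure μ : X × Y → [0,1] with |μ| > 0. Let ε, δ ∈ (0,1) and Δ ∈ (0,|μ|]. Let s, t be non-negative integers with s ≥ ⌈100·log₂(2·(srec^{0,μ}_{ε,δ}(f) + srec^{1,μ}_{ε,δ}(f)))⌉ and t ≥ ⌈100·2^s·log₂(|μ|/Δ)⌉. Then there exists a deterministic communication protocol Π such that L(Π) ≤ 4·binom(s+t, t) − 1 and adv_μ(Π) ≥ (1/10 − ε − 30(s+1)·δ^{1/4})·|μ| − Δ·L(Π). -/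
open scoped BigOperators
open scoped Classical

noncomputable section

/-! ## Probability distributions on finite types -/

/-- `p` is a probability distribution on the finite type `α`. -/
def IsDist {α : Type} [Fintype α] (p : α → ℝ) : Prop :=
  (∀ a, 0 ≤ p a) ∧ ∑ a, p a = 1

/-- `μ` (in curried form) is a probability distribution on `X × Y`. -/
def IsDist2 {X Y : Type} [Fintype X] [Fintype Y] (μ : X → Y → ℝ) : Prop :=
  (∀ x y, 0 ≤ μ x y) ∧ ∑ x, ∑ y, μ x y = 1

/-! ## Deterministic communication protocols -/

/-- A deterministic two-party communication protocol: a finite binary tree where each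
internal node is owned by Alice (`nodeA`) or Bob (`nodeB`) and is labeled by a function
of that player's input choosing one of the two children; leaves carry Boolean outputs. -/
inductive Protocol (X Y : Type) : Type
  | leaf : Bool → Protocol X Y
  | nodeA : (X → Bool) → Protocol X Y → Protocol X Y → Protocol X Y
  | nodeB : (Y → Bool) → Protocol X Y → Protocol X Y → Protocol X Y

namespace Protocol

def eval {X Y : Type} : Protocol X Y → X → Y → Bool
  | leaf b, _, _ => b
  | nodeA g t0 t1, x, y => if g x then eval t1 x y else eval t0 x y
  | nodeB g t0 t1, x, y => if g y then eval t1 x y else eval t0 x y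

/-- Depth (number of bits communicated in the worst case). -/
def depth {X Y : Type} : Protocol X Y → ℕ
  | leaf _ => 0
  | nodeA _ t0 t1 => max (depth t0) (depth t1) + 1
  | nodeB _ t0 t1 => max (depth t0) (depth t1) + 1

/-- Number of leaves. -/
def leavesCount {X Y : Type} : Protocol X Y → ℕ
  | leaf _ => 1
  | nodeA _ t0 t1 => leavesCount t0 + leavesCount t1
  | nodeB _ t0 t1 => leavesCount t0 + leavesCount t1

/-- The sequence of bits communicated on input `(x, y)`. -/
def transcript {X Y : Type} : Protocol X Y → X → Y → List Bool
  | leaf _, _, _ => []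
  | nodeA g t0 t1, x, y =>
      if g x then true :: transcript t1 x y else false :: transcript t0 x y
  | nodeB g t0 t1, x, y =>
      if g y then true :: transcript t1 x y else false :: transcript t0 x y

end Protocol

/-- Error of a deterministic protocol w.r.t. input distribution `μ`. -/
def commErr {X Y : Type} [Fintype X] [Fintype Y]
    (μ : X → Y → ℝ) (f : X → Y → Bool) (P : Protocol X Y) : ℝ :=
  ∑ x, ∑ y, if P.eval x y ≠ f x y then μ x y else 0

/-- Distributional communication complexity `CC^μ_ε(f)`: the minimum depth of a
deterministic protocol erring with probability at most `ε` under `μ`. -/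
def CCdist {X Y : Type} [Fintype X] [Fintype Y]
    (μ : X → Y → ℝ) (f : X → Y → Bool) (ε : ℝ) : ℕ :=
  sInf {d : ℕ | ∃ P : Protocol X Y, P.depth ≤ d ∧ commErr μ f P ≤ ε}

/-- The advantage `adv_μ(Π)` of a protocol w.r.t. a (not necessarily normalized) measure. -/
def protAdv {X Y : Type} [Fintype X] [Fintype Y]
    (μ : X → Y → ℝ) (f : X → Y → Bool) (P : Protocol X Y) : ℝ :=
  ∑ x, ∑ y, if P.eval x y = f x y then μ x y else - μ x y

/-! ## Information complexity -/

/-- Probability of an event under a finite (possibly unnormalized) distribution. -/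
def prOf {Ω : Type} [Fintype Ω] (p : Ω → ℝ) (q : Ω → Prop) : ℝ :=
  ∑ ω, if q ω then p ω else 0

/-- Conditional mutual information `I(A ; B | C)` (in bits) of random variables `A`, `B`, `C`
defined on a finite probability space `(Ω, p)`. -/
def condMI {Ω α β γ : Type} [Fintype Ω] (p : Ω → ℝ)
    (A : Ω → α) (B : Ω → β) (C : Ω → γ) : ℝ :=
  ∑ ω, p ω * Real.logb 2 (
    (prOf p (fun ω' => A ω' = A ω ∧ B ω' = B ω ∧ C ω' = C ω) *
      prOf p (fun ω' => C ω' = C ω)) /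
    (prOf p (fun ω' => A ω' = A ω ∧ C ω' = C ω) *
      prOf p (fun ω' => B ω' = B ω ∧ C ω' = C ω)))

/-- Internal information cost `IC^μ(Π) = I(X;T|Y) + I(Y;T|X)` of the public-coin protocol
given by a distribution `ρ` on `Fin m` together with deterministic protocols `P r`; the
transcript `T` consists of the public randomness together with the communicated bits. -/
def infoCost {X Y : Type} [Fintype X] [Fintype Y] (μ : X → Y → ℝ)
    {m : ℕ} (ρ : Fin m → ℝ) (P : Fin m → Protocol X Y) : ℝ :=
  condMI (fun ω : X × Y × Fin m => μ ω.1 ω.2.1 * ρ ω.2.2)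
      (fun ω => ω.1)
      (fun ω => (ω.2.2, (P ω.2.2).transcript ω.1 ω.2.1))
      (fun ω => ω.2.1)
  + condMI (fun ω : X × Y × Fin m => μ ω.1 ω.2.1 * ρ ω.2.2)
      (fun ω => ω.2.1)
      (fun ω => (ω.2.2, (P ω.2.2).transcript ω.1 ω.2.1))
      (fun ω => ω.1)

/-- Error of a public-coin protocol under input distribution `μ` and coin distribution `ρ`. -/
def randErr {X Y : Type} [Fintype X] [Fintype Y] (μ : X → Y → ℝ) (f : X → Y → Bool)
    {m : ℕ} (ρ : Fin m → ℝ) (P : Fin m → Protocol X Y) : ℝ :=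
  ∑ x, ∑ y, ∑ r, if (P r).eval x y ≠ f x y then μ x y * ρ r else 0

/-- `IC^μ_ε(f)`: infimum of the information cost over all public-coin protocols computing
`f` with error at most `ε` under `μ`. -/
def ICmu {X Y : Type} [Fintype X] [Fintype Y]
    (μ : X → Y → ℝ) (f : X → Y → Bool) (ε : ℝ) : ℝ :=
  sInf { c : ℝ | ∃ (m : ℕ) (ρ : Fin m → ℝ) (P : Fin m → Protocol X Y),
    IsDist ρ ∧ randErr μ f ρ P ≤ ε ∧ c = infoCost μ ρ P }

/-- `IC_ε(f) = max_μ IC^μ_ε(f)`. -/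
def IC {X Y : Type} [Fintype X] [Fintype Y] (f : X → Y → Bool) (ε : ℝ) : ℝ :=
  sSup { c : ℝ | ∃ μ : X → Y → ℝ, IsDist2 μ ∧ c = ICmu μ f ε }

/-! ## Rectangles, smooth rectangle bound and partition bound -/

/-- Total weight of rectangles containing `(x, y)`: a combinatorial rectangle is a pair
`R = (S, T)` of finite sets, and `(x,y) ∈ R` iff `x ∈ S ∧ y ∈ T`. -/
def rcov {X Y : Type} [Fintype X] [Fintype Y]
    (w : Finset X × Finset Y → ℝ) (x : X) (y : Y) : ℝ :=
  ∑ R : Finset X × Finset Y, if x ∈ R.1 ∧ y ∈ R.2 then w R else 0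

/-- `μ(R)` for a rectangle `R`. -/
def rMass {X Y : Type} [Fintype X] [Fintype Y]
    (μ : X → Y → ℝ) (R : Finset X × Finset Y) : ℝ :=
  ∑ x, ∑ y, if x ∈ R.1 ∧ y ∈ R.2 then μ x y else 0

/-- `μ_z(R) = μ(R ∩ f⁻¹(z))` for a rectangle `R`. -/
def rMassZ {X Y : Type} [Fintype X] [Fintype Y]
    (μ : X → Y → ℝ) (f : X → Y → Bool) (z : Bool) (R : Finset X × Finset Y) : ℝ :=
  ∑ x, ∑ y, if (x ∈ R.1 ∧ y ∈ R.2) ∧ f x y = z then μ x y else 0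

/-- `μ_z = μ(f⁻¹(z))`. -/
def totalZ {X Y : Type} [Fintype X] [Fintype Y]
    (μ : X → Y → ℝ) (f : X → Y → Bool) (z : Bool) : ℝ :=
  ∑ x, ∑ y, if f x y = z then μ x y else 0

/-- `|μ|`, the total mass of a measure. -/
def totalMass {X Y : Type} [Fintype X] [Fintype Y] (μ : X → Y → ℝ) : ℝ :=
  ∑ x, ∑ y, μ x y

/-- Restriction of a measure to a rectangle. -/
def restrictRect {X Y : Type} (μ : X → Y → ℝ) (R : Finset X × Finset Y) : X → Y → ℝ :=
  fun x y => if x ∈ R.1 ∧ y ∈ R.2 then μ x y else 0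

/-- Distributional smooth rectangle bound `srec^{z,μ}_{ε,δ}(f)` (LP optimal value). -/
def srecZmu {X Y : Type} [Fintype X] [Fintype Y]
    (μ : X → Y → ℝ) (f : X → Y → Bool) (z : Bool) (ε δ : ℝ) : ℝ :=
  sInf { v : ℝ | ∃ w : Finset X × Finset Y → ℝ,
    (∀ R, 0 ≤ w R) ∧
    ((1 - ε) * totalZ μ f z ≤ ∑ x, ∑ y, if f x y = z then μ x y * rcov w x y else 0) ∧
    (∀ x y, f x y ≠ z → rcov w x y ≤ δ) ∧
    (∀ x y, rcov w x y ≤ 1) ∧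
    v = ∑ R : Finset X × Finset Y, w R }

/-- `srec^μ_{ε,δ}(f) = max{srec^{0,μ}_{ε,δ}(f), srec^{1,μ}_{ε,δ}(f)}`. -/
def srecMu {X Y : Type} [Fintype X] [Fintype Y]
    (μ : X → Y → ℝ) (f : X → Y → Bool) (ε δ : ℝ) : ℝ :=
  max (srecZmu μ f false ε δ) (srecZmu μ f true ε δ)

/-- Smooth rectangle bound `srec^z_{ε,δ}(f)` (LP optimal value). -/
def srecZ {X Y : Type} [Fintype X] [Fintype Y]
    (f : X → Y → Bool) (z : Bool) (ε δ : ℝ) : ℝ :=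
  sInf { v : ℝ | ∃ w : Finset X × Finset Y → ℝ,
    (∀ R, 0 ≤ w R) ∧
    (∀ x y, f x y = z → 1 - ε ≤ rcov w x y) ∧
    (∀ x y, f x y ≠ z → rcov w x y ≤ δ) ∧
    (∀ x y, rcov w x y ≤ 1) ∧
    v = ∑ R : Finset X × Finset Y, w R }

/-- `srec_{ε,δ}(f) = max{srec^0_{ε,δ}(f), srec^1_{ε,δ}(f)}`. -/
def srec {X Y : Type} [Fintype X] [Fintype Y] (f : X → Y → Bool) (ε δ : ℝ) : ℝ :=
  max (srecZ f false ε δ) (srecZ f true ε δ)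

/-- Partition bound `prt_ε(f)` (LP optimal value). -/
def prt {X Y : Type} [Fintype X] [Fintype Y] (f : X → Y → Bool) (ε : ℝ) : ℝ :=
  sInf { v : ℝ | ∃ w : Bool → Finset X × Finset Y → ℝ,
    (∀ z R, 0 ≤ w z R) ∧
    (∀ x y, 1 - ε ≤ rcov (w (f x y)) x y) ∧
    (∀ x y, rcov (w false) x y + rcov (w true) x y = 1) ∧
    v = ∑ R : Finset X × Finset Y, (w false R + w true R) }

/-! ### General-output versions -/

/-- Smooth rectangle bound `srec^z_{ε,δ}(f)` for general output alphabet. -/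
def srecZgen {X Y Z : Type} [Fintype X] [Fintype Y]
    (f : X → Y → Z) (z : Z) (ε δ : ℝ) : ℝ :=
  sInf { v : ℝ | ∃ w : Finset X × Finset Y → ℝ,
    (∀ R, 0 ≤ w R) ∧
    (∀ x y, f x y = z → 1 - ε ≤ rcov w x y) ∧
    (∀ x y, f x y ≠ z → rcov w x y ≤ δ) ∧
    (∀ x y, rcov w x y ≤ 1) ∧
    v = ∑ R : Finset X × Finset Y, w R }

/-- `srec_{ε,δ}(f) = max_{z ∈ Z} srec^z_{ε,δ}(f)`. -/
def srecGen {X Y Z : Type} [Fintype X] [Fintype Y] [Fintype Z]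
    (f : X → Y → Z) (ε δ : ℝ) : ℝ :=
  sSup (Set.range fun z : Z => srecZgen f z ε δ)

/-- Distributional smooth rectangle bound for general output alphabet. -/
def srecZmuGen {X Y Z : Type} [Fintype X] [Fintype Y]
    (μ : X → Y → ℝ) (f : X → Y → Z) (z : Z) (ε δ : ℝ) : ℝ :=
  sInf { v : ℝ | ∃ w : Finset X × Finset Y → ℝ,
    (∀ R, 0 ≤ w R) ∧
    ((1 - ε) * (∑ x, ∑ y, if f x y = z then μ x y else 0) ≤
      ∑ x, ∑ y, if f x y = z then μ x y * rcov w x y else 0) ∧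
    (∀ x y, f x y ≠ z → rcov w x y ≤ δ) ∧
    (∀ x y, rcov w x y ≤ 1) ∧
    v = ∑ R : Finset X × Finset Y, w R }

/-- `srec^μ_{ε,δ}(f) = max_{z ∈ Z} srec^{z,μ}_{ε,δ}(f)`. -/
def srecMuGen {X Y Z : Type} [Fintype X] [Fintype Y] [Fintype Z]
    (μ : X → Y → ℝ) (f : X → Y → Z) (ε δ : ℝ) : ℝ :=
  sSup (Set.range fun z : Z => srecZmuGen μ f z ε δ)

/-- Partition bound for general output alphabet. -/
def prtGen {X Y Z : Type} [Fintype X] [Fintype Y] [Fintype Z]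
    (f : X → Y → Z) (ε : ℝ) : ℝ :=
  sInf { v : ℝ | ∃ w : Z → Finset X × Finset Y → ℝ,
    (∀ z R, 0 ≤ w z R) ∧
    (∀ x y, 1 - ε ≤ rcov (w (f x y)) x y) ∧
    (∀ x y, (∑ z : Z, rcov (w z) x y) = 1) ∧
    v = ∑ z : Z, ∑ R : Finset X × Finset Y, w z R }

/-! ## Decision trees, subcubes and the query partition bound -/

/-- Deterministic decision trees on `n` input bits. -/
inductive DTree (n : ℕ) : Type
  | leaf : Bool → DTree n
  | node : Fin n → DTree n → DTree n → DTree n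

def DTree.eval {n : ℕ} : DTree n → (Fin n → Bool) → Bool
  | .leaf b, _ => b
  | .node i t0 t1, x => if x i then DTree.eval t1 x else DTree.eval t0 x

def DTree.depth {n : ℕ} : DTree n → ℕ
  | .leaf _ => 0
  | .node _ t0 t1 => max (DTree.depth t0) (DTree.depth t1) + 1

/-- Error of a decision tree w.r.t. the input distribution `μ`. -/
def qErr {n : ℕ} (μ : (Fin n → Bool) → ℝ) (g : (Fin n → Bool) → Bool) (T : DTree n) : ℝ :=
  ∑ x, if T.eval x ≠ g x then μ x else 0

/-- Distributional query complexity `QC^μ_ε(g)`: minimum depth of a deterministic decision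
tree erring with probability at most `ε` under `μ`. -/
def QCdist {n : ℕ} (μ : (Fin n → Bool) → ℝ) (g : (Fin n → Bool) → Bool) (ε : ℝ) : ℕ :=
  sInf {d : ℕ | ∃ T : DTree n, T.depth ≤ d ∧ qErr μ g T ≤ ε}

/-- A subcube of `{0,1}ⁿ`, given by its support pattern `s ∈ {0,1,⋆}ⁿ`. -/
abbrev Subcube (n : ℕ) := Fin n → Option Bool

/-- Membership in a subcube. -/
def memCube {n : ℕ} (A : Subcube n) (x : Fin n → Bool) : Prop :=
  ∀ i, ∀ b, A i = some b → x i = b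

/-- Size of (the support of) a subcube. -/
def cubeSize {n : ℕ} (A : Subcube n) : ℕ :=
  (Finset.univ.filter fun i => (A i).isSome).card

/-- Total weight of subcubes containing `x`. -/
def cubeCov {n : ℕ} (w : Subcube n → ℝ) (x : Fin n → Bool) : ℝ :=
  ∑ A : Subcube n, if memCube A x then w A else 0

/-- Query partition bound `qprt_ε(g)` (LP optimal value). -/
def qprt {n : ℕ} (g : (Fin n → Bool) → Bool) (ε : ℝ) : ℝ :=
  sInf { v : ℝ | ∃ w : Bool → Subcube n → ℝ,
    (∀ z A, 0 ≤ w z A) ∧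
    (∀ x, 1 - ε ≤ cubeCov (w (g x)) x) ∧
    (∀ x, cubeCov (w false) x + cubeCov (w true) x = 1) ∧
    v = ∑ A : Subcube n, (w false A + w true A) * 2 ^ cubeSize A }

/-- The bit-wise product distribution on `{0,1}ⁿ` with `p_i(1) = p i`, `p_i(0) = 1 - p i`. -/
def bitProd {n : ℕ} (p : Fin n → ℝ) : (Fin n → Bool) → ℝ :=
  fun x => ∏ i, if x i then p i else 1 - p i

/-- `μ(A)` for a subcube (or any set given by a membership predicate). -/
def cubeMass {n : ℕ} (μ : (Fin n → Bool) → ℝ) (A : Subcube n) : ℝ :=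
  ∑ x, if memCube A x then μ x else 0

/-- `μ_z(A) = μ(A ∩ g⁻¹(z))` for a subcube `A`. -/
def cubeMassZ {n : ℕ} (μ : (Fin n → Bool) → ℝ) (g : (Fin n → Bool) → Bool)
    (z : Bool) (A : Subcube n) : ℝ :=
  ∑ x, if memCube A x ∧ g x = z then μ x else 0

/-- `μ_z = μ(g⁻¹(z))`. -/
def qTotalZ {n : ℕ} (μ : (Fin n → Bool) → ℝ) (g : (Fin n → Bool) → Bool) (z : Bool) : ℝ :=
  ∑ x, if g x = z then μ x else 0

/-- Mass of a finite set of pairs under the product measure `μA ⊗ μB`. -/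
def pairMass {X Y : Type} (μA : X → ℝ) (μB : Y → ℝ) (A : Finset (X × Y)) : ℝ :=
  ∑ q ∈ A, μA q.1 * μB q.2

end

/-!
The protocol is found by induction on `s` and `t`.  Take packings of rectangles for both outputs
that cover almost all of `μ`, let `v` be their total weight, and let `z` be an output carrying at
least half of it.  If no constant protocol succeeds, averaging over the packing for `!z` gives a
rectangle `R` of mass at least `|μ| / (5v)` on which almost every input has value `!z`.  The packing
for `z` then puts little weight on `R`, and as `μ` is a product measure, a constant fraction of its
rectangles (by weight) is tiny, or nearly avoids the rows of `R`, or nearly avoids its columns.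

Drop that fraction of the packing.  If it was tiny, this costs little and `s` decreases.  If it
nearly avoids the rows of `R`, it is hardly needed there: answer `!z` on `R`, recurse with the
cheaper packing on the rest of the rows of `R` (`s` decreases) and with the original one on the
other rows, which have lost the mass of `R` (`t` decreases).  Columns are symmetric, and the number
of leaves obeys Pascal's recursion.
-/

section InductiveProtocol

open Finset

variable {X Y : Type} {f : X → Y → Bool} {μ : X → Y → ℝ}
  {w w' : Bool → Finset X × Finset Y → ℝ} {z : Bool}

/-! ### Measures and rectangles -/

theorem restrictRect_nonneg (hμ : ∀ x y, 0 ≤ μ x y) (R : Finset X × Finset Y) (x : X) (y : Y) :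
    0 ≤ restrictRect μ R x y :=
  ite_nonneg (hμ x y) le_rfl

/-- `μ` is a product of two nonnegative measures. -/
def IsProduct (μ : X → Y → ℝ) : Prop :=
  ∃ (A : X → ℝ) (B : Y → ℝ), (∀ x, 0 ≤ A x) ∧ (∀ y, 0 ≤ B y) ∧ ∀ x y, μ x y = A x * B y

theorem IsProduct.nonneg (hμ : IsProduct μ) (x : X) (y : Y) : 0 ≤ μ x y := by
  obtain ⟨A, B, hA, hB, h⟩ := hμ
  exact h x y ▸ mul_nonneg (hA x) (hB y)

theorem IsProduct.restrict (hμ : IsProduct μ) (R : Finset X × Finset Y) :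
    IsProduct (restrictRect μ R) := by
  obtain ⟨A, B, hA, hB, h⟩ := hμ
  refine ⟨fun x => if x ∈ R.1 then A x else 0, fun y => if y ∈ R.2 then B y else 0,
    fun x => ite_nonneg (hA x) le_rfl, fun y => ite_nonneg (hB y) le_rfl, fun x y => ?_⟩
  simp only [restrictRect, h, ite_and, ite_mul, mul_ite, zero_mul, mul_zero]
  split_ifs <;> rfl

variable [Fintype X] [Fintype Y]

theorem rMass_nonneg (hμ : ∀ x y, 0 ≤ μ x y) (R : Finset X × Finset Y) : 0 ≤ rMass μ R :=
  sum_nonneg fun x _ => sum_nonneg fun y _ => ite_nonneg (hμ x y) le_rfl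

theorem rMass_mono (hμ : ∀ x y, 0 ≤ μ x y) {Q R : Finset X × Finset Y} (h : Q ≤ R) :
    rMass μ Q ≤ rMass μ R := by
  refine sum_le_sum fun x _ => sum_le_sum fun y _ => ?_
  split_ifs with hQ hR
  · exact le_rfl
  · exact absurd ⟨h.1 hQ.1, h.2 hQ.2⟩ hR
  · exact hμ x y
  · exact le_rfl

theorem rMass_univ (μ : X → Y → ℝ) : rMass μ (univ, univ) = totalMass μ := by
  simp [rMass, totalMass]

theorem totalMass_nonneg (hμ : ∀ x y, 0 ≤ μ x y) : 0 ≤ totalMass μ :=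
  sum_nonneg fun x _ => sum_nonneg fun y _ => hμ x y

theorem rMass_le_totalMass (hμ : ∀ x y, 0 ≤ μ x y) (R : Finset X × Finset Y) :
    rMass μ R ≤ totalMass μ :=
  rMass_univ μ ▸ rMass_mono hμ ⟨subset_univ _, subset_univ _⟩

theorem rMassZ_nonneg (hμ : ∀ x y, 0 ≤ μ x y) (f : X → Y → Bool) (z : Bool)
    (R : Finset X × Finset Y) : 0 ≤ rMassZ μ f z R :=
  sum_nonneg fun x _ => sum_nonneg fun y _ => ite_nonneg (hμ x y) le_rfl

theorem rMassZ_add_rMassZ_not (μ : X → Y → ℝ) (f : X → Y → Bool) (z : Bool)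
    (R : Finset X × Finset Y) : rMassZ μ f z R + rMassZ μ f (!z) R = rMass μ R := by
  simp only [rMassZ, rMass, ← sum_add_distrib]
  refine sum_congr rfl fun x _ => sum_congr rfl fun y _ => ?_
  cases z <;> cases f x y <;> simp

theorem rMassZ_le_rMass (hμ : ∀ x y, 0 ≤ μ x y) (f : X → Y → Bool) (z : Bool)
    (R : Finset X × Finset Y) : rMassZ μ f z R ≤ rMass μ R := by
  rw [← rMassZ_add_rMassZ_not μ f z]
  exact le_add_of_nonneg_right (rMassZ_nonneg hμ f _ R)

theorem totalZ_nonneg (hμ : ∀ x y, 0 ≤ μ x y) (f : X → Y → Bool) (z : Bool) : 0 ≤ totalZ μ f z :=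
  sum_nonneg fun x _ => sum_nonneg fun y _ => ite_nonneg (hμ x y) le_rfl

theorem totalZ_add_totalZ_not (μ : X → Y → ℝ) (f : X → Y → Bool) (z : Bool) :
    totalZ μ f z + totalZ μ f (!z) = totalMass μ := by
  simp only [totalZ, totalMass, ← sum_add_distrib]
  refine sum_congr rfl fun x _ => sum_congr rfl fun y _ => ?_
  cases z <;> cases f x y <;> simp

theorem totalMass_restrictRect (μ : X → Y → ℝ) (R : Finset X × Finset Y) :
    totalMass (restrictRect μ R) = rMass μ R :=
  rfl

theorem totalZ_restrictRect (μ : X → Y → ℝ) (f : X → Y → Bool) (z : Bool)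
    (R : Finset X × Finset Y) : totalZ (restrictRect μ R) f z = rMassZ μ f z R := by
  simp only [totalZ, restrictRect, rMassZ, ← ite_and, and_comm]

theorem rMass_restrictRect (μ : X → Y → ℝ) (Q R : Finset X × Finset Y) :
    rMass (restrictRect μ R) Q = rMass μ (Q ⊓ R) := by
  simp only [rMass, restrictRect, ← ite_and, Prod.fst_inf, Prod.snd_inf, inf_eq_inter, mem_inter,
    and_and_and_comm]

theorem totalMass_add (μ ν : X → Y → ℝ) : totalMass (μ + ν) = totalMass μ + totalMass ν := by
  simp [totalMass, sum_add_distrib]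

/-! ### Coverage by weighted rectangles -/

theorem sum_mul_rcov (μ : X → Y → ℝ) (w : Finset X × Finset Y → ℝ) :
    ∑ x, ∑ y, μ x y * rcov w x y = ∑ R, w R * rMass μ R := by
  simp only [rcov, rMass, mul_sum]
  calc
    _ = ∑ x, ∑ R : Finset X × Finset Y, ∑ y, μ x y * (if x ∈ R.1 ∧ y ∈ R.2 then w R else 0) :=
      sum_congr rfl fun x _ => sum_comm
    _ = ∑ R : Finset X × Finset Y, ∑ x, ∑ y, μ x y * (if x ∈ R.1 ∧ y ∈ R.2 then w R else 0) :=
      sum_comm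
    _ = _ := by simp only [mul_ite, mul_zero, mul_comm]

theorem sum_fiber_mul_rcov (μ : X → Y → ℝ) (f : X → Y → Bool) (z : Bool)
    (w : Finset X × Finset Y → ℝ) :
    (∑ x, ∑ y, if f x y = z then μ x y * rcov w x y else 0) = ∑ R, w R * rMassZ μ f z R := by
  simpa only [ite_mul, zero_mul, rMass, rMassZ, ite_and] using
    sum_mul_rcov (fun x y => if f x y = z then μ x y else 0) w

theorem rcov_mono {w w' : Finset X × Finset Y → ℝ} (h : ∀ R, w R ≤ w' R) (x : X) (y : Y) :
    rcov w x y ≤ rcov w' x y := by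
  refine sum_le_sum fun R _ => ?_
  split_ifs
  exacts [h R, le_rfl]

/-- The nonnegativity and packing constraints of the smooth rectangle program with parameter `δ`,
imposed on a family of weights `w z` for each output `z`. -/
structure IsPacking (f : X → Y → Bool) (δ : ℝ) (w : Bool → Finset X × Finset Y → ℝ) : Prop where
  nonneg : ∀ z R, 0 ≤ w z R
  le_one : ∀ z x y, rcov (w z) x y ≤ 1
  le_off : ∀ z x y, f x y ≠ z → rcov (w z) x y ≤ δ

/-- The total weight of a pair of families of rectangles. -/
noncomputable def coverWeight (w : Bool → Finset X × Finset Y → ℝ) : ℝ :=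
  ∑ z, ∑ R, w z R

/-- The mass that `w` leaves uncovered, where only the family `w z` counts as covering `f⁻¹(z)`. -/
noncomputable def uncovered (μ : X → Y → ℝ) (f : X → Y → Bool)
    (w : Bool → Finset X × Finset Y → ℝ) : ℝ :=
  ∑ x, ∑ y, μ x y * (1 - rcov (w (f x y)) x y)

theorem uncovered_add (μ ν : X → Y → ℝ) (f : X → Y → Bool)
    (w : Bool → Finset X × Finset Y → ℝ) :
    uncovered (μ + ν) f w = uncovered μ f w + uncovered ν f w := by
  simp [uncovered, add_mul, sum_add_distrib]

theorem uncovered_eq_totalMass_sub (μ : X → Y → ℝ) (f : X → Y → Bool)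
    (w : Bool → Finset X × Finset Y → ℝ) :
    uncovered μ f w = totalMass μ - ∑ z, ∑ R, w z R * rMassZ μ f z R := by
  simp only [← sum_fiber_mul_rcov, Fintype.sum_bool, totalMass, uncovered, ← sum_add_distrib,
    ← sum_sub_distrib]
  refine sum_congr rfl fun x _ => sum_congr rfl fun y _ => ?_
  cases f x y <;> simp [mul_sub]

theorem sum_weight_le_coverWeight (hw : ∀ z R, 0 ≤ w z R) (z : Bool) :
    ∑ R, w z R ≤ coverWeight w :=
  single_le_sum (f := fun z => ∑ R, w z R) (fun z _ => sum_nonneg fun R _ => hw z R) (mem_univ z)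

theorem exists_coverWeight_le_two_mul (w : Bool → Finset X × Finset Y → ℝ) :
    ∃ z, coverWeight w ≤ 2 * ∑ R, w z R := by
  by_contra! h
  have htrue := h true
  have hfalse := h false
  rw [coverWeight, Fintype.sum_bool] at htrue hfalse
  linarith

namespace IsPacking

variable {δ : ℝ}

theorem coverWeight_nonneg (hw : IsPacking f δ w) : 0 ≤ coverWeight w :=
  sum_nonneg fun z _ => sum_nonneg fun R _ => hw.nonneg z R

theorem uncovered_nonneg (hw : IsPacking f δ w) (hμ : ∀ x y, 0 ≤ μ x y) : 0 ≤ uncovered μ f w :=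
  sum_nonneg fun x _ => sum_nonneg fun y _ =>
    mul_nonneg (hμ x y) (sub_nonneg.2 (hw.le_one _ _ _))

theorem sum_mul_rMass_le (hw : IsPacking f δ w) (hμ : ∀ x y, 0 ≤ μ x y) (z : Bool) :
    ∑ R, w z R * rMass μ R ≤ totalMass μ := by
  rw [← sum_mul_rcov]
  exact sum_le_sum fun x _ => sum_le_sum fun y _ =>
    mul_le_of_le_one_right (hμ x y) (hw.le_one z x y)

theorem sum_mul_rMassZ_le (hw : IsPacking f δ w) (hμ : ∀ x y, 0 ≤ μ x y) (z z' : Bool) :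
    ∑ R, w z R * rMassZ μ f z' R ≤ totalZ μ f z' := by
  rw [← sum_fiber_mul_rcov]
  refine sum_le_sum fun x _ => sum_le_sum fun y _ => ?_
  split_ifs
  exacts [mul_le_of_le_one_right (hμ x y) (hw.le_one z x y), le_rfl]

theorem sum_mul_rMassZ_not_le (hw : IsPacking f δ w) (hμ : ∀ x y, 0 ≤ μ x y) (z : Bool) :
    ∑ R, w z R * rMassZ μ f (!z) R ≤ δ * totalZ μ f (!z) := by
  rw [← sum_fiber_mul_rcov, totalZ, mul_sum]
  refine sum_le_sum fun x _ => ?_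
  rw [mul_sum]
  refine sum_le_sum fun y _ => ?_
  split_ifs with h
  · rw [mul_comm δ]
    exact mul_le_mul_of_nonneg_left (hw.le_off z x y (by simp [h])) (hμ x y)
  · rw [mul_zero]

theorem sum_mul_rMass_inf_le (hw : IsPacking f δ w) (hδ : 0 ≤ δ) (hμ : ∀ x y, 0 ≤ μ x y)
    (z : Bool) (R : Finset X × Finset Y) :
    ∑ Q, w z Q * rMass μ (Q ⊓ R) ≤ rMassZ μ f z R + δ * rMass μ R := by
  have hμR := restrictRect_nonneg hμ R
  have hle : rMassZ μ f (!z) R ≤ rMass μ R := rMassZ_le_rMass hμ f (!z) R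
  have hon := hw.sum_mul_rMassZ_le hμR z z
  have hoff := hw.sum_mul_rMassZ_not_le hμR z
  rw [totalZ_restrictRect] at hon hoff
  calc
    ∑ Q, w z Q * rMass μ (Q ⊓ R)
      = ∑ Q, w z Q * rMassZ (restrictRect μ R) f z Q
          + ∑ Q, w z Q * rMassZ (restrictRect μ R) f (!z) Q := by
        simp only [← sum_add_distrib, ← mul_add, rMassZ_add_rMassZ_not, rMass_restrictRect]
    _ ≤ rMassZ μ f z R + δ * rMassZ μ f (!z) R := add_le_add hon hoff
    _ ≤ _ := by gcongr

theorem totalZ_sub_uncovered_le (hw : IsPacking f δ w) (hμ : ∀ x y, 0 ≤ μ x y) (z : Bool) :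
    totalZ μ f z - uncovered μ f w ≤ ∑ R, w z R * rMassZ μ f z R := by
  have hother := hw.sum_mul_rMassZ_le hμ (!z) (!z)
  have htotal := totalZ_add_totalZ_not μ f z
  have huncovered := uncovered_eq_totalMass_sub μ f w
  rw [Fintype.sum_bool] at huncovered
  cases z <;> simp only [Bool.not_false, Bool.not_true] at hother htotal <;> linarith

theorem totalMass_sub_uncovered_le (hw : IsPacking f δ w) (hμ : ∀ x y, 0 ≤ μ x y) :
    totalMass μ - uncovered μ f w ≤ coverWeight w * totalMass μ := by
  rw [uncovered_eq_totalMass_sub, sub_sub_cancel, coverWeight, sum_mul]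
  refine sum_le_sum fun z _ => ?_
  rw [sum_mul]
  exact sum_le_sum fun R _ => mul_le_mul_of_nonneg_left
    ((rMassZ_le_rMass hμ f z R).trans (rMass_le_totalMass hμ R)) (hw.nonneg z R)

end IsPacking

/-! ### Discarding rectangles from a packing -/

/-- The pair of families obtained from `w` by giving weight `0` to the rectangles of `D` in the
family for the output `z`. -/
noncomputable def dropRects (z : Bool) (D : Finset (Finset X × Finset Y))
    (w : Bool → Finset X × Finset Y → ℝ) : Bool → Finset X × Finset Y → ℝ :=
  fun z' R => if z' = z ∧ R ∈ D then 0 else w z' R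

theorem sum_dropRects_mul (z : Bool) (D : Finset (Finset X × Finset Y))
    (w g : Bool → Finset X × Finset Y → ℝ) :
    ∑ z', ∑ R, dropRects z D w z' R * g z' R =
      ∑ z', ∑ R, w z' R * g z' R - ∑ R ∈ D, w z R * g z R := by
  have hD : ∑ R ∈ D, w z R * g z R =
      ∑ z', ∑ R, if z' = z ∧ R ∈ D then w z' R * g z' R else 0 := by
    simp [ite_and]
  simp only [hD, ← sum_sub_distrib]
  refine sum_congr rfl fun z' _ => sum_congr rfl fun R _ => ?_
  unfold dropRects
  split_ifs <;> ring

theorem coverWeight_dropRects (z : Bool) (D : Finset (Finset X × Finset Y))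
    (w : Bool → Finset X × Finset Y → ℝ) :
    coverWeight (dropRects z D w) = coverWeight w - ∑ R ∈ D, w z R := by
  simpa [coverWeight] using sum_dropRects_mul z D w 1

theorem uncovered_dropRects (μ : X → Y → ℝ) (f : X → Y → Bool) (z : Bool)
    (D : Finset (Finset X × Finset Y)) (w : Bool → Finset X × Finset Y → ℝ) :
    uncovered μ f (dropRects z D w) =
      uncovered μ f w + ∑ R ∈ D, w z R * rMassZ μ f z R := by
  simp only [uncovered_eq_totalMass_sub, sum_dropRects_mul z D w (rMassZ μ f)]
  ring

namespace IsPacking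

variable {δ : ℝ}

theorem dropRects_le (hw : IsPacking f δ w) (z : Bool) (D : Finset (Finset X × Finset Y))
    (z' : Bool) (R : Finset X × Finset Y) : dropRects z D w z' R ≤ w z' R := by
  unfold dropRects
  split_ifs
  exacts [hw.nonneg z' R, le_rfl]

theorem drop (hw : IsPacking f δ w) (z : Bool) (D : Finset (Finset X × Finset Y)) :
    IsPacking f δ (dropRects z D w) where
  nonneg z' R := ite_nonneg le_rfl (hw.nonneg z' R)
  le_one z' x y := (rcov_mono (hw.dropRects_le z D z') x y).trans (hw.le_one z' x y)
  le_off z' x y h := (rcov_mono (hw.dropRects_le z D z') x y).trans (hw.le_off z' x y h)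

theorem uncovered_dropRects_le (hw : IsPacking f δ w) (hμ : ∀ x y, 0 ≤ μ x y) (z : Bool)
    (D : Finset (Finset X × Finset Y)) :
    uncovered μ f (dropRects z D w) ≤ uncovered μ f w + ∑ R ∈ D, w z R * rMass μ R := by
  rw [uncovered_dropRects]
  gcongr with R
  exacts [hw.nonneg z R, rMassZ_le_rMass hμ f z R]

theorem sum_mul_le_of_coverWeight_mul_le (hw : IsPacking f δ w) (hv : 0 < coverWeight w)
    {D : Finset (Finset X × Finset Y)} {g : Finset X × Finset Y → ℝ} {c : ℝ} (hc : 0 ≤ c)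
    (hD : ∀ Q ∈ D, coverWeight w * g Q ≤ c) : ∑ Q ∈ D, w z Q * g Q ≤ c := by
  refine le_of_mul_le_mul_left ?_ hv
  calc
    coverWeight w * ∑ Q ∈ D, w z Q * g Q = ∑ Q ∈ D, w z Q * (coverWeight w * g Q) := by
      rw [mul_sum]
      exact sum_congr rfl fun Q _ => mul_left_comm _ _ _
    _ ≤ ∑ Q ∈ D, w z Q * c :=
      sum_le_sum fun Q hQ => mul_le_mul_of_nonneg_left (hD Q hQ) (hw.nonneg z Q)
    _ ≤ (∑ Q, w z Q) * c := by
      rw [← sum_mul]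
      gcongr
      exacts [fun Q _ _ => hw.nonneg z Q, subset_univ D]
    _ ≤ coverWeight w * c := by
      gcongr
      exact sum_weight_le_coverWeight hw.nonneg z

theorem sum_mul_le_of_mul_totalMass_le (hw : IsPacking f δ w) (hμ : ∀ x y, 0 ≤ μ x y)
    (hm : 0 < totalMass μ) {D : Finset (Finset X × Finset Y)} {g : Finset X × Finset Y → ℝ}
    {c : ℝ} (hc : 0 ≤ c) (hD : ∀ Q ∈ D, g Q * totalMass μ ≤ c * rMass μ Q) :
    ∑ Q ∈ D, w z Q * g Q ≤ c := by
  refine le_of_mul_le_mul_right ?_ hm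
  calc
    (∑ Q ∈ D, w z Q * g Q) * totalMass μ = ∑ Q ∈ D, w z Q * (g Q * totalMass μ) := by
      simp only [sum_mul, mul_assoc]
    _ ≤ ∑ Q ∈ D, w z Q * (c * rMass μ Q) :=
      sum_le_sum fun Q hQ => mul_le_mul_of_nonneg_left (hD Q hQ) (hw.nonneg z Q)
    _ ≤ ∑ Q, w z Q * (c * rMass μ Q) :=
      sum_le_univ_sum_of_nonneg fun Q =>
        mul_nonneg (hw.nonneg z Q) (mul_nonneg hc (rMass_nonneg hμ Q))
    _ = c * ∑ Q, w z Q * rMass μ Q := by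
      rw [mul_sum]
      exact sum_congr rfl fun Q _ => mul_left_comm _ _ _
    _ ≤ c * totalMass μ := mul_le_mul_of_nonneg_left (hw.sum_mul_rMass_le hμ z) hc

end IsPacking

/-! ### Constant protocols and biased rectangles -/

theorem protAdv_leaf (μ : X → Y → ℝ) (f : X → Y → Bool) (z : Bool) :
    protAdv μ f (.leaf z) = totalMass μ - 2 * totalZ μ f (!z) := by
  simp only [protAdv, totalMass, totalZ, mul_sum, ← sum_sub_distrib]
  refine sum_congr rfl fun x _ => sum_congr rfl fun y _ => ?_
  cases z <;> cases f x y <;> grind [Protocol.eval]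

theorem exists_protAdv_leaf_nonneg (μ : X → Y → ℝ) (f : X → Y → Bool) :
    ∃ z, 0 ≤ protAdv μ f (.leaf z) := by
  by_contra! h
  have htrue := h true
  have hfalse := h false
  have htotal := totalZ_add_totalZ_not μ f true
  rw [protAdv_leaf] at htrue hfalse
  simp only [Bool.not_true, Bool.not_false] at htrue hfalse htotal
  linarith

theorem exists_sum_mul_le_sum_mul {ι : Type*} [Fintype ι] [Nonempty ι] {a : ι → ℝ}
    (ha : ∀ i, 0 ≤ a i) (g : ι → ℝ) : ∃ i, ∑ j, a j * g j ≤ (∑ j, a j) * g i := by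
  obtain ⟨i, hi⟩ := Finite.exists_max g
  exact ⟨i, sum_mul univ a (g i) ▸ sum_le_sum fun j _ => mul_le_mul_of_nonneg_left (hi j) (ha j)⟩

theorem uncovered_lt_of_protAdv_leaf_lt (hleaf : ∀ z, protAdv μ f (.leaf z) <
    1 / 10 * totalMass μ - uncovered μ f w) : uncovered μ f w < 1 / 10 * totalMass μ := by
  obtain ⟨z, hz⟩ := exists_protAdv_leaf_nonneg μ f
  linarith [hleaf z]

namespace IsPacking

variable {δ : ℝ}

theorem mul_totalMass_le_sum_bias (hw : IsPacking f δ w) (hδ : 0 ≤ δ) (hμ : ∀ x y, 0 ≤ μ x y)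
    (hleaf : ∀ z, protAdv μ f (.leaf z) < 1 / 10 * totalMass μ - uncovered μ f w) (z : Bool) :
    2 * δ * totalMass μ ≤ ∑ R, w z R * (10 * δ * rMassZ μ f z R - rMassZ μ f (!z) R) := by
  have hcovered := hw.totalZ_sub_uncovered_le hμ z
  have hnoise := hw.sum_mul_rMassZ_not_le hμ z
  have htotal := totalZ_add_totalZ_not μ f z
  have hz : 2 * totalMass μ ≤ 10 * (totalZ μ f z - uncovered μ f w) - totalZ μ f (!z) := by
    have hadv := protAdv_leaf μ f (!z)
    rw [Bool.not_not] at hadv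
    linarith [hleaf (!z), uncovered_lt_of_protAdv_leaf_lt hleaf, totalMass_nonneg hμ]
  calc
    2 * δ * totalMass μ
      ≤ 10 * δ * (totalZ μ f z - uncovered μ f w) - δ * totalZ μ f (!z) := by
        linarith [mul_le_mul_of_nonneg_left hz hδ]
    _ ≤ 10 * δ * ∑ R, w z R * rMassZ μ f z R - ∑ R, w z R * rMassZ μ f (!z) R := by gcongr
    _ = _ := by
        rw [mul_sum, ← sum_sub_distrib]
        exact sum_congr rfl fun R _ => by ring

theorem exists_biased_rect (hw : IsPacking f δ w) (hδ : 0 < δ) (hμ : ∀ x y, 0 ≤ μ x y)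
    (hm : 0 < totalMass μ)
    (hleaf : ∀ z, protAdv μ f (.leaf z) < 1 / 10 * totalMass μ - uncovered μ f w) (z : Bool) :
    ∃ R, rMassZ μ f (!z) R ≤ 10 * δ * rMass μ R ∧
      totalMass μ ≤ 5 * (coverWeight w * rMass μ R) := by
  obtain ⟨R, hR⟩ := exists_sum_mul_le_sum_mul (hw.nonneg z)
    fun R => 10 * δ * rMassZ μ f z R - rMassZ μ f (!z) R
  replace hR := (hw.mul_totalMass_le_sum_bias hδ.le hμ hleaf z).trans hR
  have hon := mul_le_mul_of_nonneg_left (rMassZ_le_rMass hμ f z R) hδ.le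
  have hoff := rMassZ_nonneg hμ f (!z) R
  have hpos : 0 < 10 * δ * rMassZ μ f z R - rMassZ μ f (!z) R :=
    pos_of_mul_pos_right (hR.trans_lt' (by positivity)) (sum_nonneg fun R _ => hw.nonneg z R)
  refine ⟨R, by linarith, le_of_mul_le_mul_left ?_ (mul_pos two_pos hδ)⟩
  calc
    2 * δ * totalMass μ ≤ coverWeight w * (10 * δ * rMassZ μ f z R - rMassZ μ f (!z) R) :=
      hR.trans (mul_le_mul_of_nonneg_right (sum_weight_le_coverWeight hw.nonneg z) hpos.le)
    _ ≤ coverWeight w * (10 * δ * rMass μ R) :=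
      mul_le_mul_of_nonneg_left (by linarith) hw.coverWeight_nonneg
    _ = _ := by ring

end IsPacking

/-! ### Product measures -/

/-- The mass of the rows in `S`. -/
noncomputable def rowMass (μ : X → Y → ℝ) (S : Finset X) : ℝ :=
  rMass μ (S, univ)

/-- The mass of the columns in `T`. -/
noncomputable def colMass (μ : X → Y → ℝ) (T : Finset Y) : ℝ :=
  rMass μ (univ, T)

theorem rowMass_univ (μ : X → Y → ℝ) : rowMass μ univ = totalMass μ :=
  rMass_univ μ

theorem colMass_univ (μ : X → Y → ℝ) : colMass μ univ = totalMass μ :=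
  rMass_univ μ

theorem rMass_compl_add_rMass_cols (μ : X → Y → ℝ) (S : Finset X) (T : Finset Y) :
    rMass μ (S, Tᶜ) + rMass μ (S, T) = rowMass μ S := by
  simp only [rowMass, rMass, ← sum_add_distrib]
  refine sum_congr rfl fun x _ => sum_congr rfl fun y _ => ?_
  by_cases hy : y ∈ T <;> simp [hy]

theorem rMass_compl_add_rMass_rows (μ : X → Y → ℝ) (S : Finset X) (T : Finset Y) :
    rMass μ (Sᶜ, T) + rMass μ (S, T) = colMass μ T := by
  simp only [colMass, rMass, ← sum_add_distrib]
  refine sum_congr rfl fun x _ => sum_congr rfl fun y _ => ?_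
  by_cases hx : x ∈ S <;> simp [hx]

/-- `U` and `S` are nearly disjoint for the set function `m`: the mass of their intersection is at
most `d` times what it would be if they were independent.  The division by `m univ` is cleared. -/
def NearlyDisjoint {α : Type*} [Fintype α] (m : Finset α → ℝ) (d : ℝ) (U S : Finset α) : Prop :=
  m (U ∩ S) * m univ ≤ d * (m U * m S)

namespace IsProduct

theorem rMass_mul_totalMass (hμ : IsProduct μ) (R : Finset X × Finset Y) :
    rMass μ R * totalMass μ = rowMass μ R.1 * colMass μ R.2 := by
  obtain ⟨A, B, -, -, h⟩ := hμ
  have hrect (Q : Finset X × Finset Y) : rMass μ Q = (∑ x ∈ Q.1, A x) * ∑ y ∈ Q.2, B y := by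
    simp [rMass, h, ite_and, sum_mul_sum]
  rw [← rMass_univ, rowMass, colMass, hrect, hrect, hrect, hrect]
  ring

theorem le_rMass_inf_of_not_nearlyDisjoint (hμ : IsProduct μ) (hm : 0 < totalMass μ) {d : ℝ}
    (hd : 0 ≤ d) {Q R : Finset X × Finset Y} (hrow : ¬NearlyDisjoint (rowMass μ) d Q.1 R.1)
    (hcol : ¬NearlyDisjoint (colMass μ) d Q.2 R.2) :
    d ^ 2 * (rMass μ Q * rMass μ R) ≤ rMass μ (Q ⊓ R) * totalMass μ := by
  rw [NearlyDisjoint, not_le, rowMass_univ] at hrow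
  rw [NearlyDisjoint, not_le, colMass_univ] at hcol
  have hrow₀ (S : Finset X) : 0 ≤ rowMass μ S := rMass_nonneg hμ.nonneg _
  have hcol₀ (T : Finset Y) : 0 ≤ colMass μ T := rMass_nonneg hμ.nonneg _
  refine le_of_mul_le_mul_right ?_ (mul_pos hm hm)
  calc
    d ^ 2 * (rMass μ Q * rMass μ R) * (totalMass μ * totalMass μ)
      = d ^ 2 * ((rMass μ Q * totalMass μ) * (rMass μ R * totalMass μ)) := by ring
    _ = d * (rowMass μ Q.1 * rowMass μ R.1) * (d * (colMass μ Q.2 * colMass μ R.2)) := by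
      rw [hμ.rMass_mul_totalMass, hμ.rMass_mul_totalMass]
      ring
    _ ≤ rowMass μ (Q.1 ∩ R.1) * totalMass μ * (colMass μ (Q.2 ∩ R.2) * totalMass μ) :=
      mul_le_mul hrow.le hcol.le (mul_nonneg hd (mul_nonneg (hcol₀ _) (hcol₀ _)))
        (mul_nonneg (hrow₀ _) hm.le)
    _ = rowMass μ (Q ⊓ R).1 * colMass μ (Q ⊓ R).2 * (totalMass μ * totalMass μ) :=
      mul_mul_mul_comm _ _ _ _
    _ = _ := by rw [← hμ.rMass_mul_totalMass]

theorem sum_mul_rMass_inf_le_of_nearlyDisjoint_rows {δ : ℝ} (hμ : IsProduct μ)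
    (hw : IsPacking f δ w) (hm : 0 < totalMass μ) {d : ℝ} (hd : 0 ≤ d) {S : Finset X}
    (T : Finset Y) {D : Finset (Finset X × Finset Y)}
    (hD : ∀ Q ∈ D, NearlyDisjoint (rowMass μ) d Q.1 S) :
    ∑ Q ∈ D, w z Q * rMass μ (Q ⊓ (S, T)) ≤ d * rowMass μ S := by
  have hcol₀ (T : Finset Y) : 0 ≤ colMass μ T := rMass_nonneg hμ.nonneg _
  refine hw.sum_mul_le_of_mul_totalMass_le hμ.nonneg hm
    (mul_nonneg hd (rMass_nonneg hμ.nonneg _)) fun Q hQ => le_of_mul_le_mul_right ?_ hm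
  calc
    rMass μ (Q ⊓ (S, T)) * totalMass μ * totalMass μ
      ≤ rMass μ (Q.1 ∩ S, Q.2) * totalMass μ * totalMass μ := by
        gcongr
        exact rMass_mono hμ.nonneg ⟨le_rfl, inter_subset_left⟩
    _ = colMass μ Q.2 * (rowMass μ (Q.1 ∩ S) * rowMass μ univ) := by
        rw [hμ.rMass_mul_totalMass, rowMass_univ]
        ring
    _ ≤ colMass μ Q.2 * (d * (rowMass μ Q.1 * rowMass μ S)) :=
        mul_le_mul_of_nonneg_left (hD Q hQ) (hcol₀ _)
    _ = d * rowMass μ S * (rowMass μ Q.1 * colMass μ Q.2) := by ring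
    _ = _ := by rw [← hμ.rMass_mul_totalMass, mul_assoc _ (rMass μ Q)]

theorem sum_mul_rMass_inf_le_of_nearlyDisjoint_cols {δ : ℝ} (hμ : IsProduct μ)
    (hw : IsPacking f δ w) (hm : 0 < totalMass μ) {d : ℝ} (hd : 0 ≤ d) (S : Finset X)
    {T : Finset Y} {D : Finset (Finset X × Finset Y)}
    (hD : ∀ Q ∈ D, NearlyDisjoint (colMass μ) d Q.2 T) :
    ∑ Q ∈ D, w z Q * rMass μ (Q ⊓ (S, T)) ≤ d * colMass μ T := by
  have hrow₀ (S : Finset X) : 0 ≤ rowMass μ S := rMass_nonneg hμ.nonneg _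
  refine hw.sum_mul_le_of_mul_totalMass_le hμ.nonneg hm
    (mul_nonneg hd (rMass_nonneg hμ.nonneg _)) fun Q hQ => le_of_mul_le_mul_right ?_ hm
  calc
    rMass μ (Q ⊓ (S, T)) * totalMass μ * totalMass μ
      ≤ rMass μ (Q.1, Q.2 ∩ T) * totalMass μ * totalMass μ := by
        gcongr
        exact rMass_mono hμ.nonneg ⟨inter_subset_left, le_rfl⟩
    _ = rowMass μ Q.1 * (colMass μ (Q.2 ∩ T) * colMass μ univ) := by
        rw [hμ.rMass_mul_totalMass, colMass_univ]
        ring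
    _ ≤ rowMass μ Q.1 * (d * (colMass μ Q.2 * colMass μ T)) :=
        mul_le_mul_of_nonneg_left (hD Q hQ) (hrow₀ _)
    _ = d * colMass μ T * (rowMass μ Q.1 * colMass μ Q.2) := by ring
    _ = _ := by rw [← hμ.rMass_mul_totalMass, mul_assoc _ (rMass μ Q)]

/-! ### A discardable part of a packing -/

theorem sum_weight_le_of_not_nearlyDisjoint {d : ℝ} (hμ : IsProduct μ) (hm : 0 < totalMass μ)
    (hw : IsPacking f (d ^ 4) w) (hd : 0 < d) (hd' : d ≤ 1 / 10) {R : Finset X × Finset Y}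
    (hR : 0 < rMass μ R) (hbias : rMassZ μ f z R ≤ 10 * d ^ 4 * rMass μ R)
    {E : Finset (Finset X × Finset Y)}
    (hE : ∀ Q ∈ E, 30 * d * totalMass μ < coverWeight w * rMass μ Q ∧
      ¬NearlyDisjoint (rowMass μ) d Q.1 R.1 ∧ ¬NearlyDisjoint (colMass μ) d Q.2 R.2) :
    ∑ Q ∈ E, w z Q ≤ coverWeight w / 20 := by
  have hv := hw.coverWeight_nonneg
  have hmeet (Q) (hQ : Q ∈ E) : 30 * d ^ 3 * rMass μ R ≤ coverWeight w * rMass μ (Q ⊓ R) := by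
    obtain ⟨hlarge, hrow, hcol⟩ := hE Q hQ
    refine le_of_mul_le_mul_right ?_ hm
    calc
      30 * d ^ 3 * rMass μ R * totalMass μ = d ^ 2 * rMass μ R * (30 * d * totalMass μ) := by ring
      _ ≤ d ^ 2 * rMass μ R * (coverWeight w * rMass μ Q) := by gcongr
      _ = coverWeight w * (d ^ 2 * (rMass μ Q * rMass μ R)) := by ring
      _ ≤ coverWeight w * (rMass μ (Q ⊓ R) * totalMass μ) :=
        mul_le_mul_of_nonneg_left (hμ.le_rMass_inf_of_not_nearlyDisjoint hm hd.le hrow hcol) hv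
      _ = _ := (mul_assoc _ _ _).symm
  have hc : 0 < 30 * d ^ 3 * rMass μ R := by positivity
  refine le_of_mul_le_mul_right ?_ hc
  calc
    (∑ Q ∈ E, w z Q) * (30 * d ^ 3 * rMass μ R)
      ≤ ∑ Q ∈ E, w z Q * (coverWeight w * rMass μ (Q ⊓ R)) := by
        rw [sum_mul]
        exact sum_le_sum fun Q hQ => mul_le_mul_of_nonneg_left (hmeet Q hQ) (hw.nonneg z Q)
    _ ≤ ∑ Q, w z Q * (coverWeight w * rMass μ (Q ⊓ R)) :=
        sum_le_univ_sum_of_nonneg fun Q =>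
          mul_nonneg (hw.nonneg z Q) (mul_nonneg hv (rMass_nonneg hμ.nonneg _))
    _ = coverWeight w * ∑ Q, w z Q * rMass μ (Q ⊓ R) := by
        rw [mul_sum]
        exact sum_congr rfl fun Q _ => mul_left_comm _ _ _
    _ ≤ coverWeight w * (10 * d ^ 4 * rMass μ R + d ^ 4 * rMass μ R) := by
        gcongr
        exact (hw.sum_mul_rMass_inf_le (by positivity) hμ.nonneg z R).trans (by gcongr)
    _ = 22 * d / 3 * (coverWeight w / 20 * (30 * d ^ 3 * rMass μ R)) := by ring
    _ ≤ _ := mul_le_of_le_one_left (by positivity) (by linarith)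

theorem exists_discardable {d : ℝ} (hμ : IsProduct μ) (hm : 0 < totalMass μ)
    (hw : IsPacking f (d ^ 4) w) (hd : 0 < d) (hd' : d ≤ 1 / 10)
    (hz : coverWeight w ≤ 2 * ∑ Q, w z Q) {R : Finset X × Finset Y}
    (hR : 0 < rMass μ R) (hbias : rMassZ μ f z R ≤ 10 * d ^ 4 * rMass μ R) :
    ∃ D : Finset (Finset X × Finset Y), coverWeight w / 20 ≤ ∑ Q ∈ D, w z Q ∧
      ((∀ Q ∈ D, coverWeight w * rMass μ Q ≤ 30 * d * totalMass μ) ∨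
        (∀ Q ∈ D, NearlyDisjoint (rowMass μ) d Q.1 R.1) ∨
        ∀ Q ∈ D, NearlyDisjoint (colMass μ) d Q.2 R.2) := by
  let tiny := univ.filter fun Q => coverWeight w * rMass μ Q ≤ 30 * d * totalMass μ
  let offRows := univ.filter fun Q : Finset X × Finset Y => NearlyDisjoint (rowMass μ) d Q.1 R.1
  let offCols := univ.filter fun Q : Finset X × Finset Y => NearlyDisjoint (colMass μ) d Q.2 R.2
  let generic := univ \ (tiny ∪ offRows ∪ offCols)
  have hgeneric : ∑ Q ∈ generic, w z Q ≤ coverWeight w / 20 :=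
    hμ.sum_weight_le_of_not_nearlyDisjoint hm hw hd hd' hR hbias fun Q hQ => by
      simpa [generic, tiny, offRows, offCols, and_assoc] using hQ
  have hcover : ∑ Q, w z Q ≤
      ∑ Q ∈ tiny, w z Q + ∑ Q ∈ offRows, w z Q + ∑ Q ∈ offCols, w z Q + ∑ Q ∈ generic, w z Q := by
    have hunion (D E : Finset (Finset X × Finset Y)) :
        ∑ Q ∈ D ∪ E, w z Q ≤ ∑ Q ∈ D, w z Q + ∑ Q ∈ E, w z Q :=
      sum_union_inter (s₁ := D) (s₂ := E) (f := w z) ▸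
        le_add_of_nonneg_right (sum_nonneg fun Q _ => hw.nonneg z Q)
    rw [← sum_sdiff (subset_univ (tiny ∪ offRows ∪ offCols)), add_comm]
    linarith [hunion (tiny ∪ offRows) offCols, hunion tiny offRows]
  have hv := hw.coverWeight_nonneg
  by_cases htiny : coverWeight w / 20 ≤ ∑ Q ∈ tiny, w z Q
  · exact ⟨tiny, htiny, .inl fun Q hQ => (mem_filter.1 hQ).2⟩
  by_cases hrows : coverWeight w / 20 ≤ ∑ Q ∈ offRows, w z Q
  · exact ⟨offRows, hrows, .inr (.inl fun Q hQ => (mem_filter.1 hQ).2)⟩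
  refine ⟨offCols, ?_, .inr (.inr fun Q hQ => (mem_filter.1 hQ).2)⟩
  linarith

end IsProduct

/-! ### Splitting off a rectangle -/

/-- The rectangles `R₁`, `R₂`, `R₃` partition the inputs, and two bits of communication decide
which of them contains the input. -/
structure IsSplit (R₁ R₂ R₃ : Finset X × Finset Y) : Prop where
  restrict_add : ∀ μ : X → Y → ℝ, restrictRect μ R₁ + (restrictRect μ R₂ + restrictRect μ R₃) = μ
  join : ∀ P₁ P₂ P₃ : Protocol X Y, ∃ P : Protocol X Y,
    P.leavesCount = P₁.leavesCount + (P₂.leavesCount + P₃.leavesCount) ∧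
      ∀ (μ : X → Y → ℝ) (f : X → Y → Bool), protAdv μ f P = protAdv (restrictRect μ R₁) f P₁ +
        (protAdv (restrictRect μ R₂) f P₂ + protAdv (restrictRect μ R₃) f P₃)

theorem isSplit_rows (S : Finset X) (T : Finset Y) : IsSplit (Sᶜ, univ) (S, Tᶜ) (S, T) where
  restrict_add μ := by
    ext x y
    by_cases hx : x ∈ S <;> by_cases hy : y ∈ T <;> simp [restrictRect, hx, hy]
  join P₁ P₂ P₃ := by
    refine ⟨.nodeA (fun x => decide (x ∈ S)) P₁ (.nodeB (fun y => decide (y ∈ T)) P₂ P₃),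
      rfl, fun μ f => ?_⟩
    simp only [protAdv, ← sum_add_distrib]
    refine sum_congr rfl fun x _ => sum_congr rfl fun y _ => ?_
    by_cases hx : x ∈ S <;> by_cases hy : y ∈ T <;> simp [restrictRect, Protocol.eval, hx, hy]

theorem isSplit_cols (S : Finset X) (T : Finset Y) : IsSplit (univ, Tᶜ) (Sᶜ, T) (S, T) where
  restrict_add μ := by
    ext x y
    by_cases hx : x ∈ S <;> by_cases hy : y ∈ T <;> simp [restrictRect, hx, hy]
  join P₁ P₂ P₃ := by
    refine ⟨.nodeB (fun y => decide (y ∈ T)) P₁ (.nodeA (fun x => decide (x ∈ S)) P₂ P₃),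
      rfl, fun μ f => ?_⟩
    simp only [protAdv, ← sum_add_distrib]
    refine sum_congr rfl fun x _ => sum_congr rfl fun y _ => ?_
    by_cases hx : x ∈ S <;> by_cases hy : y ∈ T <;> simp [restrictRect, Protocol.eval, hx, hy]

namespace IsSplit

variable {R₁ R₂ R₃ : Finset X × Finset Y}

theorem rMass_add_rMass (h : IsSplit R₁ R₂ R₃) (μ : X → Y → ℝ) :
    rMass μ R₁ + (rMass μ R₂ + rMass μ R₃) = totalMass μ := by
  simp only [← totalMass_restrictRect, ← totalMass_add, h.restrict_add]

theorem uncovered_restrictRect (h : IsSplit R₁ R₂ R₃) (μ : X → Y → ℝ) (f : X → Y → Bool)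
    (w : Bool → Finset X × Finset Y → ℝ) :
    uncovered (restrictRect μ R₁) f w +
      (uncovered (restrictRect μ R₂) f w + uncovered (restrictRect μ R₃) f w) =
        uncovered μ f w := by
  simp only [← uncovered_add, h.restrict_add]

end IsSplit

/-- What one step of the construction achieves for the measure `μ` when it replaces the packing `w`
by `w'`: either `w'` is as good as `w` up to a loss of `30 d |μ|`, or a rectangle `R₃` on which a
constant output does well can be split off in such a way that `w'` is nearly as good as `w` on
`R₂`. -/
inductive ReductionStep (f : X → Y → Bool) (d : ℝ) (μ : X → Y → ℝ)
    (w w' : Bool → Finset X × Finset Y → ℝ) : Prop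
  | drop (h : uncovered μ f w' ≤ uncovered μ f w + 30 * d * totalMass μ)
  | split {R₁ R₂ R₃ : Finset X × Finset Y} {z : Bool} (hsplit : IsSplit R₁ R₂ R₃)
      (hmass : totalMass μ ≤ 5 * (coverWeight w * rMass μ R₃))
      (hloss : uncovered (restrictRect μ R₂) f w' ≤
        uncovered (restrictRect μ R₂) f w + d * (rMass μ R₂ + rMass μ R₃))
      (hadv : 1 / 2 * rMass μ R₃ ≤ protAdv (restrictRect μ R₃) f (.leaf z))

namespace IsProduct

theorem uncovered_dropRects_le_rows {δ : ℝ} (hμ : IsProduct μ) (hw : IsPacking f δ w)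
    (hm : 0 < totalMass μ) {d : ℝ} (hd : 0 ≤ d) {S : Finset X} (T : Finset Y)
    {D : Finset (Finset X × Finset Y)} (hD : ∀ Q ∈ D, NearlyDisjoint (rowMass μ) d Q.1 S) :
    uncovered (restrictRect μ (S, Tᶜ)) f (dropRects z D w) ≤
      uncovered (restrictRect μ (S, Tᶜ)) f w + d * (rMass μ (S, Tᶜ) + rMass μ (S, T)) := by
  refine (hw.uncovered_dropRects_le (hμ.restrict _).nonneg z D).trans ?_
  gcongr
  simp only [rMass_restrictRect, rMass_compl_add_rMass_cols]
  exact hμ.sum_mul_rMass_inf_le_of_nearlyDisjoint_rows hw hm hd Tᶜ hD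

theorem uncovered_dropRects_le_cols {δ : ℝ} (hμ : IsProduct μ) (hw : IsPacking f δ w)
    (hm : 0 < totalMass μ) {d : ℝ} (hd : 0 ≤ d) (S : Finset X) {T : Finset Y}
    {D : Finset (Finset X × Finset Y)} (hD : ∀ Q ∈ D, NearlyDisjoint (colMass μ) d Q.2 T) :
    uncovered (restrictRect μ (Sᶜ, T)) f (dropRects z D w) ≤
      uncovered (restrictRect μ (Sᶜ, T)) f w + d * (rMass μ (Sᶜ, T) + rMass μ (S, T)) := by
  refine (hw.uncovered_dropRects_le (hμ.restrict _).nonneg z D).trans ?_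
  gcongr
  simp only [rMass_restrictRect, rMass_compl_add_rMass_rows]
  exact hμ.sum_mul_rMass_inf_le_of_nearlyDisjoint_cols hw hm hd Sᶜ hD

theorem exists_reductionStep {d : ℝ} (hμ : IsProduct μ) (hw : IsPacking f (d ^ 4) w)
    (hd : 0 < d) (hd' : d ≤ 1 / 10)
    (hleaf : ∀ z, protAdv μ f (.leaf z) < 1 / 10 * totalMass μ - uncovered μ f w) :
    ∃ w', IsPacking f (d ^ 4) w' ∧ coverWeight w' ≤ 19 / 20 * coverWeight w ∧
      ReductionStep f d μ w w' := by
  have hm : 0 < totalMass μ := by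
    linarith [uncovered_lt_of_protAdv_leaf_lt hleaf, hw.uncovered_nonneg hμ.nonneg]
  obtain ⟨z, hz⟩ := exists_coverWeight_le_two_mul w
  obtain ⟨R, hbias, hmass⟩ := hw.exists_biased_rect (by positivity) hμ.nonneg hm hleaf (!z)
  rw [Bool.not_not] at hbias
  have hv : 0 < coverWeight w := by
    refine hw.coverWeight_nonneg.lt_of_ne fun h => ?_
    rw [← h] at hmass
    linarith
  have hR : 0 < rMass μ R := pos_of_mul_pos_right (by linarith) hv.le
  have hadv : 1 / 2 * rMass μ R ≤ protAdv (restrictRect μ R) f (.leaf !z) := by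
    have hd4 : d ^ 4 ≤ (1 / 10) ^ 4 := by gcongr
    rw [protAdv_leaf, Bool.not_not, totalMass_restrictRect, totalZ_restrictRect]
    nlinarith
  obtain ⟨D, hweight, hD⟩ := hμ.exists_discardable hm hw hd hd' hz hR hbias
  refine ⟨dropRects z D w, hw.drop z D, ?_, ?_⟩
  · rw [coverWeight_dropRects]
    linarith
  rcases hD with htiny | hrows | hcols
  · refine .drop ((hw.uncovered_dropRects_le hμ.nonneg z D).trans ?_)
    gcongr
    exact hw.sum_mul_le_of_coverWeight_mul_le hv (by positivity) htiny
  · exact .split (isSplit_rows R.1 R.2) hmass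
      (hμ.uncovered_dropRects_le_rows hw hm hd.le R.2 hrows) hadv
  · exact .split (isSplit_cols R.1 R.2) hmass
      (hμ.uncovered_dropRects_le_cols hw hm hd.le R.1 hcols) hadv

end IsProduct

/-! ### The induction -/

/-- Some protocol with fewer than `N` leaves has advantage at least `c |μ|`, up to the mass not
covered by `w` and a cost of `Δ` per leaf.  The bound on the leaves is strict so that the bounds of
two recursive calls add up even though a leaf is added. -/
def HasProtocol (f : X → Y → Bool) (Δ : ℝ) (μ : X → Y → ℝ)
    (w : Bool → Finset X × Finset Y → ℝ) (c : ℝ) (N : ℕ) : Prop :=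
  ∃ P : Protocol X Y, P.leavesCount < N ∧
    c * totalMass μ - uncovered μ f w - Δ * P.leavesCount ≤ protAdv μ f P

section HasProtocol

variable {Δ c c' ℓ : ℝ} {N N₁ N₂ : ℕ}

theorem hasProtocol_of_leaf
    (h : c * totalMass μ - uncovered μ f w - Δ ≤ protAdv μ f (.leaf z)) (hN : 1 < N) :
    HasProtocol f Δ μ w c N :=
  ⟨.leaf z, hN, by simpa [Protocol.leavesCount] using h⟩

theorem HasProtocol.of_uncovered_le (h : HasProtocol f Δ μ w' c' N₁) (hm : 0 ≤ totalMass μ)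
    (hu : uncovered μ f w' ≤ uncovered μ f w + ℓ * totalMass μ) (hc : c + ℓ ≤ c')
    (hN : N₁ ≤ N) : HasProtocol f Δ μ w c N := by
  obtain ⟨P, hP, hadv⟩ := h
  refine ⟨P, hP.trans_le hN, ?_⟩
  linarith [mul_le_mul_of_nonneg_right hc hm]

theorem HasProtocol.of_split {R₁ R₂ R₃ : Finset X × Finset Y} (hsplit : IsSplit R₁ R₂ R₃)
    (h₁ : HasProtocol f Δ (restrictRect μ R₁) w c N₁)
    (h₂ : HasProtocol f Δ (restrictRect μ R₂) w' c' N₂)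
    (hadv : 1 / 2 * rMass μ R₃ ≤ protAdv (restrictRect μ R₃) f (.leaf z))
    (hloss : uncovered (restrictRect μ R₂) f w' ≤
      uncovered (restrictRect μ R₂) f w + ℓ * (rMass μ R₂ + rMass μ R₃))
    (hu : 0 ≤ uncovered (restrictRect μ R₃) f w) (hμ : ∀ x y, 0 ≤ μ x y) (hΔ : 0 ≤ Δ)
    (hc : c + ℓ ≤ c') (hc' : c + ℓ ≤ 1 / 2) : HasProtocol f Δ μ w c (N₁ + N₂) := by
  obtain ⟨P₁, hN₁, hP₁⟩ := h₁
  obtain ⟨P₂, hN₂, hP₂⟩ := h₂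
  obtain ⟨P, hleaves, hP⟩ := hsplit.join P₁ P₂ (.leaf z)
  rw [Protocol.leavesCount] at hleaves
  refine ⟨P, by omega, ?_⟩
  rw [hP, hleaves, ← hsplit.uncovered_restrictRect, ← hsplit.rMass_add_rMass]
  rw [totalMass_restrictRect] at hP₁ hP₂
  push_cast
  linarith [mul_le_mul_of_nonneg_right hc (rMass_nonneg hμ R₂),
    mul_le_mul_of_nonneg_right hc' (rMass_nonneg hμ R₃)]

end HasProtocol

theorem two_rpow_le_one_add {x : ℝ} (h₀ : 0 ≤ x) (h₁ : x ≤ 1) : (2 : ℝ) ^ x ≤ 1 + x := by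
  simpa [one_add_one_eq_two] using
    rpow_one_add_le_one_add_mul_self (s := 1) (by norm_num) h₀ h₁

theorem le_mul_two_rpow_of_le_one_sub {k C m m' x : ℝ} (hk : 1 ≤ k) (hC : 0 ≤ C)
    (hm : m ≤ C * 2 ^ ((x + 1) / k)) (hm' : m' ≤ (1 - 1 / k) * m) : m' ≤ C * 2 ^ (x / k) := by
  have hk₀ : 0 ≤ 1 / k := by positivity
  have hk₁ : 1 / k ≤ 1 := (div_le_one₀ (by linarith)).2 hk
  calc
    m' ≤ (1 - 1 / k) * m := hm'
    _ ≤ (1 - 1 / k) * (C * 2 ^ ((x + 1) / k)) := by gcongr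
    _ = C * 2 ^ (x / k) * ((1 - 1 / k) * 2 ^ (1 / k)) := by
      rw [add_div, Real.rpow_add two_pos]
      ring
    _ ≤ C * 2 ^ (x / k) * ((1 - 1 / k) * (1 + 1 / k)) := by
      gcongr
      exact two_rpow_le_one_add hk₀ hk₁
    _ ≤ C * 2 ^ (x / k) := mul_le_of_le_one_right (by positivity) (by nlinarith)

/-- The invariant of the induction: `s` bounds the weight of the packing and `t` the mass of the
measure, both on a logarithmic scale. -/
structure Admissible (f : X → Y → Bool) (d Δ : ℝ) (s t : ℕ) (μ : X → Y → ℝ)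
    (w : Bool → Finset X × Finset Y → ℝ) : Prop where
  isProduct : IsProduct μ
  isPacking : IsPacking f (d ^ 4) w
  coverWeight_le : coverWeight w ≤ 3 / 4 * 2 ^ ((s : ℝ) / 100)
  totalMass_le : totalMass μ ≤ Δ * 2 ^ ((t : ℝ) / (100 * 2 ^ s))

namespace Admissible

variable {d Δ : ℝ} {s t : ℕ} {μ' : X → Y → ℝ}

theorem pred_left (h : Admissible f d Δ (s + 1) t μ w) (hΔ : 0 ≤ Δ) (hμ' : IsProduct μ')
    (hm : totalMass μ' ≤ totalMass μ) (hw' : IsPacking f (d ^ 4) w')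
    (hv : coverWeight w' ≤ 19 / 20 * coverWeight w) : Admissible f d Δ s t μ' w' where
  isProduct := hμ'
  isPacking := hw'
  coverWeight_le := by
    refine le_mul_two_rpow_of_le_one_sub (by norm_num) (by norm_num)
      (by simpa using h.coverWeight_le) (hv.trans ?_)
    gcongr
    exacts [h.isPacking.coverWeight_nonneg, by norm_num]
  totalMass_le := by
    refine (hm.trans h.totalMass_le).trans ?_
    gcongr
    exacts [one_le_two, one_le_two, s.le_succ]

theorem pred_right (h : Admissible f d Δ s (t + 1) μ w) (hΔ : 0 ≤ Δ) (hμ' : IsProduct μ') {p : ℝ}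
    (hp : 0 ≤ p) (hmass : totalMass μ ≤ 5 * (coverWeight w * p))
    (hm : totalMass μ' ≤ totalMass μ - p) : Admissible f d Δ s t μ' w where
  isProduct := hμ'
  isPacking := h.isPacking
  coverWeight_le := h.coverWeight_le
  totalMass_le := by
    have hk : (1 : ℝ) ≤ 2 ^ s := one_le_pow₀ one_le_two
    refine le_mul_two_rpow_of_le_one_sub (by linarith) hΔ (by simpa using h.totalMass_le)
      (hm.trans ?_)
    have hweight : coverWeight w ≤ 3 / 4 * 2 ^ s := by
      refine h.coverWeight_le.trans ?_
      rw [← Real.rpow_natCast]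
      gcongr
      exacts [one_le_two, div_le_self s.cast_nonneg (by norm_num)]
    have hp' : totalMass μ ≤ 100 * 2 ^ s * p := by nlinarith [mul_le_mul_of_nonneg_right hweight hp]
    rw [one_sub_mul, one_div_mul_eq_div]
    gcongr
    exact (div_le_iff₀' (by positivity)).2 hp'

theorem hasProtocol_of_descent {N₁ N₂ : ℕ} {c c' : ℝ} (h : Admissible f d Δ (s + 1) (t + 1) μ w)
    (hd : 0 < d) (hd' : d ≤ 1 / 10) (hΔ : 0 ≤ Δ) (hc : c + 30 * d ≤ c') (hc' : c' ≤ 1 / 10)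
    (ihs : ∀ μ w, Admissible f d Δ s (t + 1) μ w → HasProtocol f Δ μ w c' N₂)
    (iht : ∀ μ w, Admissible f d Δ (s + 1) t μ w → HasProtocol f Δ μ w c N₁)
    (hleaf : ∀ z, protAdv μ f (.leaf z) < 1 / 10 * totalMass μ - uncovered μ f w) :
    HasProtocol f Δ μ w c (N₁ + N₂) := by
  obtain ⟨w', hw', hv, hstep⟩ := h.isProduct.exists_reductionStep h.isPacking hd hd' hleaf
  have hμ := h.isProduct.nonneg
  cases hstep with
  | drop hu =>
    exact (ihs μ w' (h.pred_left hΔ h.isProduct le_rfl hw' hv)).of_uncovered_le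
      (totalMass_nonneg hμ) hu hc (Nat.le_add_left N₂ N₁)
  | @split R₁ R₂ R₃ z hsplit hmass hloss hadv =>
    have hR₁ := hsplit.rMass_add_rMass μ
    have hm₂ := rMass_nonneg hμ R₂
    refine .of_split hsplit
      (iht _ _ (h.pred_right hΔ (h.isProduct.restrict R₁) (rMass_nonneg hμ R₃) hmass ?_))
      (ihs _ _ (h.pred_left hΔ (h.isProduct.restrict R₂) (rMass_le_totalMass hμ R₂) hw' hv))
      hadv hloss (h.isPacking.uncovered_nonneg (h.isProduct.restrict R₃).nonneg) hμ hΔ ?_ ?_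
    · rw [totalMass_restrictRect]
      linarith
    all_goals linarith

theorem exists_leaf_zero_left (h : Admissible f d Δ 0 t μ w) (hΔ : 0 ≤ Δ) :
    ∃ z, 1 / 10 * totalMass μ - uncovered μ f w - Δ ≤ protAdv μ f (.leaf z) := by
  obtain ⟨z, hz⟩ := exists_protAdv_leaf_nonneg μ f
  have hm := totalMass_nonneg h.isProduct.nonneg
  have hweight : coverWeight w ≤ 3 / 4 := by simpa using h.coverWeight_le
  have hcovered := h.isPacking.totalMass_sub_uncovered_le h.isProduct.nonneg
  exact ⟨z, by linarith [mul_le_mul_of_nonneg_right hweight hm]⟩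

theorem exists_leaf_zero_right (h : Admissible f d Δ s 0 μ w) :
    ∃ z, 1 / 10 * totalMass μ - uncovered μ f w - Δ ≤ protAdv μ f (.leaf z) := by
  obtain ⟨z, hz⟩ := exists_protAdv_leaf_nonneg μ f
  have hm := totalMass_nonneg h.isProduct.nonneg
  have hmass : totalMass μ ≤ Δ := by simpa using h.totalMass_le
  have hu := h.isPacking.uncovered_nonneg h.isProduct.nonneg
  exact ⟨z, by linarith⟩

theorem hasProtocol (hd : 0 < d) (hd' : d ≤ 1 / 10) (hΔ : 0 ≤ Δ) (s t : ℕ) :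
    ∀ (μ : X → Y → ℝ) (w : Bool → Finset X × Finset Y → ℝ), Admissible f d Δ s t μ w →
      HasProtocol f Δ μ w (1 / 10 - 30 * ((s : ℝ) + 1) * d) (4 * (s + t).choose t) := by
  intro μ w h
  by_cases hleaf : ∃ z, 1 / 10 * totalMass μ - uncovered μ f w - Δ ≤ protAdv μ f (.leaf z)
  · obtain ⟨z, hz⟩ := hleaf
    have hchoose := Nat.choose_pos (Nat.le_add_left t s)
    refine hasProtocol_of_leaf (z := z) (le_trans ?_ hz) (by lia)
    gcongr
    exacts [totalMass_nonneg h.isProduct.nonneg, sub_le_self _ (by positivity)]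
  match s, t with
  | 0, _ => exact absurd (h.exists_leaf_zero_left hΔ) hleaf
  | _, 0 => exact absurd h.exists_leaf_zero_right hleaf
  | s + 1, t + 1 =>
    push Not at hleaf
    have hpascal : 4 * (s + 1 + (t + 1)).choose (t + 1) =
        4 * (s + 1 + t).choose t + 4 * (s + (t + 1)).choose (t + 1) := by
      rw [← Nat.add_assoc, Nat.choose_succ_succ, mul_add, Nat.add_right_comm s, Nat.add_assoc s]
    rw [hpascal]
    refine h.hasProtocol_of_descent hd hd' hΔ ?_ ?_ (hasProtocol hd hd' hΔ s (t + 1))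
      (hasProtocol hd hd' hΔ (s + 1) t) fun z => ?_
    · push_cast
      linarith
    · exact sub_le_self _ (by positivity)
    · linarith [hleaf z]

end Admissible

/-! ### From the linear programs to a packing -/

/-- `w` is a feasible solution of the linear program whose value is `srecZmu μ f z ε δ`. -/
structure IsFeasible (μ : X → Y → ℝ) (f : X → Y → Bool) (z : Bool) (ε δ : ℝ)
    (w : Finset X × Finset Y → ℝ) : Prop where
  nonneg : ∀ R, 0 ≤ w R
  covers : (1 - ε) * totalZ μ f z ≤ ∑ R, w R * rMassZ μ f z R
  le_off : ∀ x y, f x y ≠ z → rcov w x y ≤ δ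
  le_one : ∀ x y, rcov w x y ≤ 1

theorem exists_rcov_eq_indicator (f : X → Y → Bool) (z : Bool) :
    ∃ w : Finset X × Finset Y → ℝ, (∀ R, 0 ≤ w R) ∧
      ∀ x y, rcov w x y = if f x y = z then 1 else 0 := by
  refine ⟨fun R => if ∃ x y, f x y = z ∧ R = ({x}, {y}) then 1 else 0,
    fun R => ite_nonneg zero_le_one le_rfl, fun x y => ?_⟩
  rw [rcov, sum_eq_single ({x}, {y})]
  · simp
  · rintro R - hR
    simp only [ite_eq_right_iff, one_ne_zero, imp_false]
    rintro ⟨hx, hy⟩ ⟨x', y', -, rfl⟩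
    rw [mem_singleton.1 hx, mem_singleton.1 hy] at hR
    exact hR rfl
  · exact fun h => absurd (mem_univ _) h

theorem exists_isFeasible (hμ : ∀ x y, 0 ≤ μ x y) (f : X → Y → Bool) (z : Bool) {ε δ : ℝ}
    (hε : 0 ≤ ε) (hδ : 0 ≤ δ) : ∃ w, IsFeasible μ f z ε δ w := by
  obtain ⟨w, hw, hcov⟩ := exists_rcov_eq_indicator f z
  refine ⟨w, hw, ?_, fun x y h => ?_, fun x y => ?_⟩
  · have htotal : ∑ R, w R * rMassZ μ f z R = totalZ μ f z := by
      rw [← sum_fiber_mul_rcov, totalZ]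
      refine sum_congr rfl fun x _ => sum_congr rfl fun y _ => ?_
      split_ifs with h <;> simp [hcov, h]
    rw [htotal]
    exact mul_le_of_le_one_left (totalZ_nonneg hμ f z) (sub_le_self _ hε)
  · rwa [hcov, if_neg h]
  · rw [hcov]
    split_ifs
    exacts [le_rfl, zero_le_one]

theorem exists_isFeasible_sum_lt (hμ : ∀ x y, 0 ≤ μ x y) {ε δ c : ℝ} (hε : 0 ≤ ε) (hδ : 0 ≤ δ)
    (hc : srecZmu μ f z ε δ < c) : ∃ w, IsFeasible μ f z ε δ w ∧ ∑ R, w R < c := by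
  rw [srecZmu] at hc
  simp only [sum_fiber_mul_rcov] at hc
  obtain ⟨w₀, hw₀⟩ := exists_isFeasible hμ f z hε hδ
  obtain ⟨v, ⟨w, hnonneg, hcovers, hoff, hone, rfl⟩, hlt⟩ := exists_lt_of_csInf_lt
    (by exact ⟨_, w₀, hw₀.nonneg, hw₀.covers, hw₀.le_off, hw₀.le_one, rfl⟩) hc
  exact ⟨w, ⟨hnonneg, hcovers, hoff, hone⟩, hlt⟩

theorem exists_isPacking (hμ : ∀ x y, 0 ≤ μ x y) {ε δ c : ℝ} (hε : 0 ≤ ε) (hδ : 0 ≤ δ)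
    (hc : srecZmu μ f false ε δ + srecZmu μ f true ε δ < c) :
    ∃ w, IsPacking f δ w ∧ coverWeight w ≤ c ∧ uncovered μ f w ≤ ε * totalMass μ := by
  obtain ⟨wfalse, hfalse, hfalse_lt⟩ :=
    exists_isFeasible_sum_lt hμ hε hδ (lt_sub_iff_add_lt.2 hc)
  obtain ⟨wtrue, htrue, htrue_lt⟩ := exists_isFeasible_sum_lt hμ hε hδ (lt_sub_comm.1 hfalse_lt)
  refine ⟨fun z => bif z then wtrue else wfalse, ⟨?_, ?_, ?_⟩, ?_, ?_⟩
  · exact Bool.rec hfalse.nonneg htrue.nonneg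
  · exact Bool.rec hfalse.le_one htrue.le_one
  · exact Bool.rec hfalse.le_off htrue.le_off
  · rw [coverWeight, Fintype.sum_bool]
    exact (lt_sub_iff_add_lt.1 htrue_lt).le
  · have htotal := totalZ_add_totalZ_not μ f true
    rw [uncovered_eq_totalMass_sub, Fintype.sum_bool]
    simp only [cond_true, cond_false, Bool.not_true] at htotal ⊢
    rw [← htotal]
    linarith [hfalse.covers, htrue.covers]

theorem le_two_rpow_of_ceil_mul_logb_le {k x : ℝ} {n : ℕ} (hk : 0 < k)
    (h : ⌈k * Real.logb 2 x⌉ ≤ (n : ℤ)) : x ≤ 2 ^ ((n : ℝ) / k) := by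
  rcases le_or_gt x 0 with hx | hx
  · exact hx.trans (by positivity)
  · rw [← Real.logb_le_iff_le_rpow one_lt_two hx, le_div_iff₀' hk]
    exact_mod_cast Int.ceil_le.1 h

theorem exists_admissible (hμ : IsProduct μ) {d Δ ε : ℝ} {s t : ℕ} (hε : 0 ≤ ε) (hd : 0 ≤ d)
    (hΔ : 0 < Δ)
    (hs : ⌈(100 : ℝ) * Real.logb 2
        (2 * (srecZmu μ f false ε (d ^ 4) + srecZmu μ f true ε (d ^ 4)))⌉ ≤ (s : ℤ))
    (ht : ⌈(100 : ℝ) * 2 ^ s * Real.logb 2 (totalMass μ / Δ)⌉ ≤ (t : ℤ)) :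
    ∃ w, Admissible f d Δ s t μ w ∧ uncovered μ f w ≤ ε * totalMass μ := by
  have hweight := le_two_rpow_of_ceil_mul_logb_le (by norm_num) hs
  have hmass := le_two_rpow_of_ceil_mul_logb_le (by positivity) ht
  have hpos : (0 : ℝ) < 2 ^ ((s : ℝ) / 100) := by positivity
  obtain ⟨w, hw, hv, hu⟩ := exists_isPacking (f := f) (c := 3 / 4 * 2 ^ ((s : ℝ) / 100))
    hμ.nonneg hε (pow_nonneg hd 4) (by linarith)
  exact ⟨w, ⟨hμ, hw, hv, (div_le_iff₀' hΔ).1 hmass⟩, hu⟩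

theorem induction_protocol_general (hμ : IsProduct μ) {ε δ Δ : ℝ} (hε : 0 ≤ ε) (hδ : 0 < δ)
    (hΔ : 0 < Δ) {s t : ℕ}
    (hs : ⌈(100 : ℝ) * Real.logb 2
        (2 * (srecZmu μ f false ε δ + srecZmu μ f true ε δ))⌉ ≤ (s : ℤ))
    (ht : ⌈(100 : ℝ) * 2 ^ s * Real.logb 2 (totalMass μ / Δ)⌉ ≤ (t : ℤ)) :
    ∃ P : Protocol X Y,
      P.leavesCount ≤ 4 * Nat.choose (s + t) t - 1 ∧
      (1 / 10 - ε - 30 * ((s : ℝ) + 1) * δ ^ ((1 : ℝ) / 4)) * totalMass μ -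
          Δ * (P.leavesCount : ℝ) ≤ protAdv μ f P := by
  obtain ⟨d, hd, rfl⟩ : ∃ d : ℝ, 0 < d ∧ d ^ 4 = δ :=
    ⟨δ ^ (4⁻¹ : ℝ), by positivity, by exact_mod_cast Real.rpow_inv_natCast_pow hδ.le four_ne_zero⟩
  have hroot : (d ^ 4) ^ ((1 : ℝ) / 4) = d := by
    rw [one_div]
    exact_mod_cast Real.pow_rpow_inv_natCast hd.le four_ne_zero
  rw [hroot]
  obtain ⟨w, hw, hu⟩ := exists_admissible hμ hε hd.le hΔ hs ht
  rcases le_or_gt d (1 / 10) with hsmall | hlarge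
  · obtain ⟨P, hleaves, hadv⟩ := Admissible.hasProtocol hd hsmall hΔ.le s t μ w hw
    exact ⟨P, by lia, by linarith⟩
  · obtain ⟨z, hz⟩ := exists_protAdv_leaf_nonneg μ f
    have hchoose := Nat.choose_pos (Nat.le_add_left t s)
    refine ⟨.leaf z, by rw [Protocol.leavesCount]; lia, hz.trans' ?_⟩
    have hcoeff : 1 / 10 - ε - 30 * ((s : ℝ) + 1) * d ≤ 0 := by
      nlinarith [s.cast_nonneg (α := ℝ)]
    have hle := mul_nonpos_of_nonpos_of_nonneg hcoeff (totalMass_nonneg hμ.nonneg)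
    simp only [Protocol.leavesCount, Nat.cast_one]
    linarith

end InductiveProtocol

/-- **Lemma 2.6 (inductive protocol construction).** For a product measure
`μ : X × Y → [0,1]` with `|μ| > 0`, `ε, δ ∈ (0,1)`, `Δ ∈ (0,|μ|]`, and nonnegative
integers `s ≥ ⌈100·log(2(srec^{0,μ}_{ε,δ}(f)+srec^{1,μ}_{ε,δ}(f)))⌉` and
`t ≥ ⌈100·2ˢ·log(|μ|/Δ)⌉`, there is a protocol `Π` with
`L(Π) ≤ 4·C(s+t,t) - 1` and `adv_μ(Π) ≥ (1/10 - ε - 30(s+1)δ^{1/4})|μ| - Δ·L(Π)`. -/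
theorem induction_protocol {X Y : Type} [Fintype X] [Fintype Y]
    (f : X → Y → Bool) (μA : X → ℝ) (μB : Y → ℝ)
    (hA : ∀ x, 0 ≤ μA x) (hB : ∀ y, 0 ≤ μB y)
    (μ : X → Y → ℝ) (hμ : ∀ x y, μ x y = μA x * μB y)
    (hμ1 : ∀ x y, μ x y ≤ 1) (hμpos : 0 < totalMass μ)
    (ε δ : ℝ) (hε : ε ∈ Set.Ioo (0 : ℝ) 1) (hδ : δ ∈ Set.Ioo (0 : ℝ) 1)
    (Δ : ℝ) (hΔ : Δ ∈ Set.Ioc (0 : ℝ) (totalMass μ))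
    (s t : ℕ)
    (hs : ⌈(100 : ℝ) * Real.logb 2
        (2 * (srecZmu μ f false ε δ + srecZmu μ f true ε δ))⌉ ≤ (s : ℤ))
    (ht : ⌈(100 : ℝ) * 2 ^ s * Real.logb 2 (totalMass μ / Δ)⌉ ≤ (t : ℤ)) :
    ∃ P : Protocol X Y,
      P.leavesCount ≤ 4 * Nat.choose (s + t) t - 1 ∧
      (1 / 10 - ε - 30 * ((s : ℝ) + 1) * δ ^ ((1 : ℝ) / 4)) * totalMass μ -
          Δ * (P.leavesCount : ℝ) ≤ protAdv μ f P :=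
  induction_protocol_general ⟨μA, μB, hA, hB, hμ⟩ hε.1.le hδ.1 hΔ.1 hs ht
end

section
/- There is a universal constant C > 0 such that for every f : {0,1}^n × {0,1}^n → {0,1} and every δ ∈ (0, 1/8): IC_δ(f) ≤ C · log(1/δ) · IC_{1/8}(f). -/
open scoped BigOperators
open scoped Classical

/-!
A public-coin protocol has information cost equal to the average over its coins of
`H(T | Y) + H(T | X)`, where `T` is the transcript of the deterministic protocol that is run; by
subadditivity of entropy, `k` independent repetitions cost at most `k` times as much. Repeating
`O(log (1 / δ))` times and voting brings the error down to `δ`, provided that the error of a single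
run is bounded away from `1/2` on *every* input, not only on average under `μ`.

To arrange this, mix `μ` with an arbitrary distribution `w` on the inputs. A protocol that is cheap
and accurate under `t * μ + (1 - t) * w` costs at most `1 / t` times as much under `μ` and errs
under `w` with probability at most `ε / (1 - t)`, which is below `1/2` for small `t` as `ε < 1/2`.
Since `w` is arbitrary, the minimax theorem turns these protocols into a single one that errs with
probability below `1/2` on every input and is still cheap under `μ`.
-/

/-! ### Conditional probability and conditional entropy -/

section Entropy

variable {Ω α β γ : Type} [Fintype Ω] {p q : Ω → ℝ}

lemma prOf_nonneg (hp : ∀ ω, 0 ≤ p ω) (r : Ω → Prop) : 0 ≤ prOf p r :=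
  Finset.sum_nonneg fun ω _ => by split_ifs <;> simp [hp ω]

lemma prOf_mono (hp : ∀ ω, 0 ≤ p ω) {r s : Ω → Prop} (h : ∀ ω, r ω → s ω) :
    prOf p r ≤ prOf p s := by
  refine Finset.sum_le_sum fun ω _ => ?_
  by_cases hr : r ω
  · simp [hr, h ω hr]
  · by_cases hs : s ω <;> simp [hr, hs, hp ω]

lemma prOf_pos (hp : ∀ ω, 0 ≤ p ω) {r : Ω → Prop} {ω : Ω} (hω : 0 < p ω) (h : r ω) :
    0 < prOf p r :=
  Finset.sum_pos' (fun ω _ => by split_ifs <;> simp [hp ω]) ⟨ω, Finset.mem_univ ω, by simpa [h]⟩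

lemma sum_mul_comp_eq_sum_prOf (p : Ω → ℝ) {A : Ω → α} {S : Finset α} (hS : ∀ ω, A ω ∈ S)
    (F : α → ℝ) : ∑ ω, p ω * F (A ω) = ∑ a ∈ S, prOf p (fun ω => A ω = a) * F a := by
  simp only [prOf, Finset.sum_mul, ite_mul, zero_mul]
  rw [Finset.sum_comm]
  exact Finset.sum_congr rfl fun ω _ => by simp [hS ω]

/-- The conditional probability `p(A = a | C = c)`, which is `0` when `p(C = c) = 0`. -/
noncomputable def condProb (p : Ω → ℝ) (A : Ω → α) (C : Ω → γ) (a : α) (c : γ) : ℝ :=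
  prOf p (fun ω => A ω = a ∧ C ω = c) / prOf p (fun ω => C ω = c)

/-- The conditional entropy `H(A | C)`, in bits, of random variables on the finite space `Ω` with
(possibly unnormalized) weights `p`. -/
noncomputable def condEnt (p : Ω → ℝ) (A : Ω → α) (C : Ω → γ) : ℝ :=
  ∑ ω, p ω * -Real.logb 2 (condProb p A C (A ω) (C ω))

/-- The conditional cross entropy, in bits, of `A` given `C` relative to the conditional
(sub)probabilities `Q a c`: the expected length of a code for `A` designed for `Q`. -/
noncomputable def condCrossEnt (p : Ω → ℝ) (A : Ω → α) (C : Ω → γ) (Q : α → γ → ℝ) : ℝ :=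
  ∑ ω, p ω * -Real.logb 2 (Q (A ω) (C ω))

lemma condProb_nonneg (hp : ∀ ω, 0 ≤ p ω) (A : Ω → α) (C : Ω → γ) (a : α) (c : γ) :
    0 ≤ condProb p A C a c :=
  div_nonneg (prOf_nonneg hp _) (prOf_nonneg hp _)

lemma condProb_pos (hp : ∀ ω, 0 ≤ p ω) (A : Ω → α) (C : Ω → γ) {ω : Ω} (hω : 0 < p ω) :
    0 < condProb p A C (A ω) (C ω) :=
  div_pos (prOf_pos hp hω ⟨rfl, rfl⟩) (prOf_pos hp hω rfl)

lemma condProb_le_one (hp : ∀ ω, 0 ≤ p ω) (A : Ω → α) (C : Ω → γ) (a : α) (c : γ) :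
    condProb p A C a c ≤ 1 :=
  div_le_one_of_le₀ (prOf_mono hp fun _ h => h.2) (prOf_nonneg hp _)

lemma condProb_le_condProb_comp (hp : ∀ ω, 0 ≤ p ω) (A : Ω → α) (C : Ω → γ) (F : α → β) (a : α)
    (c : γ) : condProb p A C a c ≤ condProb p (fun ω => F (A ω)) C (F a) c :=
  div_le_div_of_nonneg_right (prOf_mono hp fun _ h => ⟨congrArg F h.1, h.2⟩) (prOf_nonneg hp _)

lemma sum_condProb_le_one (hp : ∀ ω, 0 ≤ p ω) (A : Ω → α) (C : Ω → γ) (S : Finset α) (c : γ) :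
    ∑ a ∈ S, condProb p A C a c ≤ 1 := by
  simp only [condProb, ← Finset.sum_div]
  refine div_le_one_of_le₀ ?_ (prOf_nonneg hp _)
  simp only [prOf]
  rw [Finset.sum_comm]
  refine Finset.sum_le_sum fun ω _ => ?_
  by_cases h : C ω = c
  · simp only [h, and_true, if_true, Finset.sum_ite_eq]
    split_ifs <;> simp [hp ω]
  · simp [h]

lemma neg_logb_condProb_nonneg (hp : ∀ ω, 0 ≤ p ω) (A : Ω → α) (C : Ω → γ) (a : α) (c : γ) :
    0 ≤ -Real.logb 2 (condProb p A C a c) :=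
  neg_nonneg.2 <| Real.logb_nonpos one_lt_two (condProb_nonneg hp A C a c)
    (condProb_le_one hp A C a c)

lemma condEnt_nonneg (hp : ∀ ω, 0 ≤ p ω) (A : Ω → α) (C : Ω → γ) : 0 ≤ condEnt p A C :=
  Finset.sum_nonneg fun ω _ => mul_nonneg (hp ω) (neg_logb_condProb_nonneg hp A C _ _)

lemma condEnt_comp_le (hp : ∀ ω, 0 ≤ p ω) (A : Ω → α) (C : Ω → γ) (F : α → β) :
    condEnt p (fun ω => F (A ω)) C ≤ condEnt p A C := by
  refine Finset.sum_le_sum fun ω _ => ?_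
  rcases (hp ω).eq_or_lt with hω | hω
  · simp [← hω]
  · refine mul_le_mul_of_nonneg_left (neg_le_neg ?_) (hp ω)
    exact Real.logb_le_logb_of_le one_lt_two (condProb_pos hp A C hω)
      (condProb_le_condProb_comp hp A C F _ _)

lemma condEnt_eq_zero_of_factorsThrough (p : Ω → ℝ) {A : Ω → α} {C : Ω → γ}
    (h : A.FactorsThrough C) : condEnt p A C = 0 := by
  refine Finset.sum_eq_zero fun ω _ => ?_
  have hiff : ∀ ω', (A ω' = A ω ∧ C ω' = C ω) ↔ C ω' = C ω :=
    fun ω' => and_iff_right_of_imp fun hC => h hC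
  rw [condProb]
  simp only [hiff]
  rcases eq_or_ne (prOf p fun ω' => C ω' = C ω) 0 with h0 | h0 <;> simp [h0]

lemma sum_mul_div_condProb_le (hp : ∀ ω, 0 ≤ p ω) {A : Ω → α} (C : Ω → γ) {S : Finset α}
    (hS : ∀ ω, A ω ∈ S) {Q : α → γ → ℝ} (hQ₀ : ∀ a c, 0 ≤ Q a c)
    (hQ₁ : ∀ c, ∑ a ∈ S, Q a c ≤ 1) :
    ∑ ω, p ω * (Q (A ω) (C ω) / condProb p A C (A ω) (C ω)) ≤ ∑ ω, p ω := by
  have hC : ∀ ω, C ω ∈ Finset.univ.image C := fun ω =>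
    Finset.mem_image_of_mem C (Finset.mem_univ ω)
  have hterm : ∀ a c, prOf p (fun ω => A ω = a ∧ C ω = c) * (Q a c / condProb p A C a c) ≤
      prOf p (fun ω => C ω = c) * Q a c := by
    intro a c
    rcases (prOf_nonneg hp fun ω => A ω = a ∧ C ω = c).eq_or_lt with h | h
    · rw [← h, zero_mul]
      exact mul_nonneg (prOf_nonneg hp _) (hQ₀ a c)
    · rw [condProb, div_div_eq_mul_div, mul_div_cancel₀ _ h.ne', mul_comm]
  calc ∑ ω, p ω * (Q (A ω) (C ω) / condProb p A C (A ω) (C ω))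
      = ∑ d ∈ S ×ˢ Finset.univ.image C, prOf p (fun ω => (A ω, C ω) = d) *
          (Q d.1 d.2 / condProb p A C d.1 d.2) :=
        sum_mul_comp_eq_sum_prOf p (A := fun ω => (A ω, C ω))
          (fun ω => Finset.mk_mem_product (hS ω) (hC ω))
          fun d => Q d.1 d.2 / condProb p A C d.1 d.2
    _ ≤ ∑ c ∈ Finset.univ.image C, ∑ a ∈ S, prOf p (fun ω => C ω = c) * Q a c := by
        rw [Finset.sum_product_right]
        simp only [Prod.mk.injEq]
        exact Finset.sum_le_sum fun c _ => Finset.sum_le_sum fun a _ => hterm a c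
    _ ≤ ∑ c ∈ Finset.univ.image C, prOf p (fun ω => C ω = c) * 1 := by
        simp only [← Finset.mul_sum]
        exact Finset.sum_le_sum fun c _ => mul_le_mul_of_nonneg_left (hQ₁ c) (prOf_nonneg hp _)
    _ = ∑ ω, p ω := by
        rw [← sum_mul_comp_eq_sum_prOf p hC fun _ => 1]
        simp only [mul_one]

theorem condEnt_le_condCrossEnt (hp : ∀ ω, 0 ≤ p ω) {A : Ω → α} (C : Ω → γ) {S : Finset α}
    (hS : ∀ ω, A ω ∈ S) {Q : α → γ → ℝ} (hQ₀ : ∀ a c, 0 ≤ Q a c)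
    (hQ₁ : ∀ c, ∑ a ∈ S, Q a c ≤ 1) (hQ : ∀ ω, 0 < p ω → 0 < Q (A ω) (C ω)) :
    condEnt p A C ≤ condCrossEnt p A C Q := by
  have hterm : ∀ ω, p ω * -Real.logb 2 (condProb p A C (A ω) (C ω)) -
      p ω * -Real.logb 2 (Q (A ω) (C ω)) ≤
      (p ω * (Q (A ω) (C ω) / condProb p A C (A ω) (C ω)) - p ω) / Real.log 2 := by
    intro ω
    rcases (hp ω).eq_or_lt with hω | hω
    · simp [← hω]
    · have hP := condProb_pos hp A C hω
      calc _ = p ω * Real.log (Q (A ω) (C ω) / condProb p A C (A ω) (C ω)) / Real.log 2 := by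
            rw [Real.log_div (hQ ω hω).ne' hP.ne', Real.logb, Real.logb]
            ring
        _ ≤ p ω * (Q (A ω) (C ω) / condProb p A C (A ω) (C ω) - 1) / Real.log 2 := by
            gcongr
            exact Real.log_le_sub_one_of_pos (div_pos (hQ ω hω) hP)
        _ = _ := by rw [mul_sub_one]
  rw [← sub_nonpos, condEnt, condCrossEnt, ← Finset.sum_sub_distrib]
  refine (Finset.sum_le_sum fun ω _ => hterm ω).trans ?_
  rw [← Finset.sum_div, Finset.sum_sub_distrib]
  exact div_nonpos_of_nonpos_of_nonneg
    (sub_nonpos.2 (sum_mul_div_condProb_le hp C hS hQ₀ hQ₁)) (Real.log_nonneg one_le_two)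

lemma condEnt_pair_le (hp : ∀ ω, 0 ≤ p ω) (A : Ω → α) (B : Ω → β) (C : Ω → γ) :
    condEnt p (fun ω => (A ω, B ω)) C ≤ condEnt p A C + condEnt p B C := by
  let Q : α × β → γ → ℝ := fun d c => condProb p A C d.1 c * condProb p B C d.2 c
  have hS : ∀ ω, (A ω, B ω) ∈ Finset.univ.image A ×ˢ Finset.univ.image B := fun ω => by simp
  have hQ₁ : ∀ c, ∑ d ∈ Finset.univ.image A ×ˢ Finset.univ.image B, Q d c ≤ 1 := by
    intro c
    simp only [Q, Finset.sum_product, ← Finset.mul_sum]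
    calc _ ≤ ∑ a ∈ Finset.univ.image A, condProb p A C a c :=
          Finset.sum_le_sum fun a _ => mul_le_of_le_one_right (condProb_nonneg hp A C a c)
            (sum_condProb_le_one hp B C _ c)
      _ ≤ 1 := sum_condProb_le_one hp A C _ c
  calc condEnt p (fun ω => (A ω, B ω)) C
      ≤ condCrossEnt p (fun ω => (A ω, B ω)) C Q :=
        condEnt_le_condCrossEnt hp C hS
          (fun d c => mul_nonneg (condProb_nonneg hp A C d.1 c) (condProb_nonneg hp B C d.2 c))
          hQ₁ fun ω hω => mul_pos (condProb_pos hp A C hω) (condProb_pos hp B C hω)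
    _ = condEnt p A C + condEnt p B C := by
        rw [condCrossEnt, condEnt, condEnt, ← Finset.sum_add_distrib]
        refine Finset.sum_congr rfl fun ω _ => ?_
        rcases (hp ω).eq_or_lt with hω | hω
        · simp [← hω]
        · rw [Real.logb_mul (condProb_pos hp A C hω).ne' (condProb_pos hp B C hω).ne']
          ring

lemma condEnt_flatten_le (hp : ∀ ω, 0 ≤ p ω) (l : List (Ω → List β)) (C : Ω → γ) :
    condEnt p (fun ω => (l.map fun A => A ω).flatten) C ≤
      (l.map fun A => condEnt p A C).sum := by
  induction l with
  | nil => exact (condEnt_eq_zero_of_factorsThrough p fun _ _ _ => rfl).le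
  | cons A l ih =>
    simp only [List.map_cons, List.flatten_cons, List.sum_cons]
    calc _ ≤ condEnt p (fun ω => (A ω, (l.map fun A => A ω).flatten)) C :=
          condEnt_comp_le hp (fun ω => (A ω, (l.map fun A => A ω).flatten)) C fun d => d.1 ++ d.2
      _ ≤ _ := (condEnt_pair_le hp _ _ C).trans (add_le_add_right ih _)

lemma condEnt_le_logb_card (hp : IsDist p) {A : Ω → α} (C : Ω → γ) {S : Finset α}
    (hS : ∀ ω, A ω ∈ S) : condEnt p A C ≤ Real.logb 2 S.card := by
  have hcard (ω : Ω) : (0 : ℝ) < S.card := Nat.cast_pos.2 (Finset.card_pos.2 ⟨A ω, hS ω⟩)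
  calc condEnt p A C ≤ condCrossEnt p A C fun _ _ => (S.card : ℝ)⁻¹ :=
        condEnt_le_condCrossEnt hp.1 C hS
          (fun _ _ => by positivity) (fun _ => by simpa using mul_inv_le_one)
          fun ω _ => inv_pos.2 (hcard ω)
    _ = Real.logb 2 S.card := by
        rw [condCrossEnt, ← Finset.sum_mul, hp.2, Real.logb_inv, one_mul, neg_neg]

/-- Concavity of `H(A | C)` in the weights: `q` is `t * p` plus a nonnegative remainder, whose
entropy is dropped. -/
lemma mul_condEnt_le_condEnt (hp : ∀ ω, 0 ≤ p ω) {t : ℝ} (ht : 0 < t)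
    (h : ∀ ω, t * p ω ≤ q ω) (A : Ω → α) (C : Ω → γ) :
    t * condEnt p A C ≤ condEnt q A C := by
  have hq : ∀ ω, 0 ≤ q ω := fun ω => (mul_nonneg ht.le (hp ω)).trans (h ω)
  calc t * condEnt p A C
      ≤ t * condCrossEnt p A C (condProb q A C) :=
        mul_le_mul_of_nonneg_left (condEnt_le_condCrossEnt hp C
          (fun ω => Finset.mem_image_of_mem A (Finset.mem_univ ω)) (condProb_nonneg hq A C)
          (sum_condProb_le_one hq A C _)
          fun ω hω => condProb_pos hq A C ((mul_pos ht hω).trans_le (h ω))) ht.le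
    _ ≤ condEnt q A C := by
        rw [condCrossEnt, Finset.mul_sum]
        refine Finset.sum_le_sum fun ω _ => ?_
        rw [← mul_assoc]
        exact mul_le_mul_of_nonneg_right (h ω) (neg_logb_condProb_nonneg hq A C _ _)

end Entropy

/-! ### Mutual information with public randomness -/

section MutualInformation

variable {Ω Ω' R α β γ τ : Type} [Fintype Ω] [Fintype Ω'] [Fintype R]
  {p : Ω → ℝ} {ρ : R → ℝ}

lemma condMI_comp_equiv (e : Ω' ≃ Ω) (p : Ω → ℝ) (A : Ω → α) (B : Ω → β) (C : Ω → γ) :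
    condMI (p ∘ e) (A ∘ e) (B ∘ e) (C ∘ e) = condMI p A B C := by
  have hprOf : ∀ r : Ω → Prop, prOf (p ∘ e) (fun ω => r (e ω)) = prOf p r := fun r =>
    e.sum_comp fun ω => if r ω then p ω else 0
  rw [condMI, condMI, ← e.sum_comp]
  exact Finset.sum_congr rfl fun ω _ => by simp only [Function.comp_apply, ← hprOf]

lemma condMI_eq_condEnt_sub (hp : ∀ ω, 0 ≤ p ω) (A : Ω → α) (B : Ω → β) (C : Ω → γ) :
    condMI p A B C = condEnt p B C - condEnt p B (fun ω => (A ω, C ω)) := by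
  rw [condMI, condEnt, condEnt, ← Finset.sum_sub_distrib]
  refine Finset.sum_congr rfl fun ω _ => ?_
  rcases (hp ω).eq_or_lt with hω | hω
  · simp [← hω]
  have hC : 0 < prOf p (fun ω' => C ω' = C ω) := prOf_pos hp hω rfl
  have hAC : 0 < prOf p (fun ω' => A ω' = A ω ∧ C ω' = C ω) := prOf_pos hp hω ⟨rfl, rfl⟩
  have hBC : 0 < prOf p (fun ω' => B ω' = B ω ∧ C ω' = C ω) := prOf_pos hp hω ⟨rfl, rfl⟩
  have hABC : 0 < prOf p (fun ω' => A ω' = A ω ∧ B ω' = B ω ∧ C ω' = C ω) :=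
    prOf_pos hp hω ⟨rfl, rfl, rfl⟩
  simp only [condProb, Prod.mk.injEq, and_left_comm (a := B _ = _)]
  rw [Real.logb_div (mul_pos hABC hC).ne' (mul_pos hAC hBC).ne', Real.logb_mul hABC.ne' hC.ne',
    Real.logb_mul hAC.ne' hBC.ne', Real.logb_div hBC.ne' hC.ne', Real.logb_div hABC.ne' hAC.ne']
  ring

lemma condProb_coin_pair (hρ : IsDist ρ) (T : R → Ω → τ) (C : Ω → γ) (r : R) (t : τ) (c : γ) :
    condProb (fun ω : Ω × R => p ω.1 * ρ ω.2) (fun ω => (ω.2, T ω.2 ω.1)) (fun ω => C ω.1)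
      (r, t) c = ρ r * condProb p (T r) C t c := by
  have hC : prOf (fun ω : Ω × R => p ω.1 * ρ ω.2) (fun ω => C ω.1 = c) =
      prOf p (fun ω => C ω = c) := by
    simp only [prOf, Fintype.sum_prod_type]
    refine Finset.sum_congr rfl fun ω _ => ?_
    split_ifs <;> simp [← Finset.mul_sum, hρ.2]
  have hTC : prOf (fun ω : Ω × R => p ω.1 * ρ ω.2)
      (fun ω => (ω.2, T ω.2 ω.1) = (r, t) ∧ C ω.1 = c) =
      ρ r * prOf p (fun ω => T r ω = t ∧ C ω = c) := by
    simp only [prOf, Fintype.sum_prod_type, Finset.mul_sum]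
    refine Finset.sum_congr rfl fun ω _ => ?_
    rw [Finset.sum_eq_single r (fun s _ hs => by simp [hs]) (by simp)]
    simp [mul_comm]
  rw [condProb, hC, hTC, mul_div_assoc, condProb]

lemma condEnt_coin_pair (hp : IsDist p) (hρ : IsDist ρ) (T : R → Ω → τ) (C : Ω → γ) :
    condEnt (fun ω : Ω × R => p ω.1 * ρ ω.2) (fun ω => (ω.2, T ω.2 ω.1)) (fun ω => C ω.1) =
      ∑ r, ρ r * -Real.logb 2 (ρ r) + ∑ r, ρ r * condEnt p (T r) C := by
  have hterm : ∀ ω r, p ω * ρ r * -Real.logb 2 (ρ r * condProb p (T r) C (T r ω) (C ω)) =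
      p ω * (ρ r * -Real.logb 2 (ρ r)) +
        ρ r * (p ω * -Real.logb 2 (condProb p (T r) C (T r ω) (C ω))) := by
    intro ω r
    rcases (hp.1 ω).eq_or_lt with hω | hω
    · simp [← hω]
    rcases (hρ.1 r).eq_or_lt with hr | hr
    · simp [← hr]
    rw [Real.logb_mul hr.ne' (condProb_pos hp.1 (T r) C hω).ne']
    ring
  simp only [condEnt, condProb_coin_pair hρ, Fintype.sum_prod_type, hterm, Finset.sum_add_distrib,
    ← Finset.mul_sum, ← Finset.sum_mul, hp.2, one_mul, add_right_inj]
  simp only [Finset.mul_sum]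
  exact Finset.sum_comm

/-- Public coins carry no information about the inputs, and given the coins and both inputs the
value `T` is determined, so only `H(T | C, coins)` survives. -/
theorem condMI_coin_eq_sum_condEnt (hp : IsDist p) (hρ : IsDist ρ) {A : Ω → α} {C : Ω → γ}
    (hAC : Function.Injective fun ω => (A ω, C ω)) (T : R → Ω → τ) :
    condMI (fun ω : Ω × R => p ω.1 * ρ ω.2) (fun ω => A ω.1) (fun ω => (ω.2, T ω.2 ω.1))
      (fun ω => C ω.1) = ∑ r, ρ r * condEnt p (T r) C := by
  have hdet : ∀ r, condEnt p (T r) (fun ω => (A ω, C ω)) = 0 := fun r =>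
    condEnt_eq_zero_of_factorsThrough p (hAC.factorsThrough (T r))
  rw [condMI_eq_condEnt_sub fun ω : Ω × R => mul_nonneg (hp.1 ω.1) (hρ.1 ω.2),
    condEnt_coin_pair hp hρ, condEnt_coin_pair hp hρ T fun ω => (A ω, C ω)]
  simp [hdet]

end MutualInformation

/-! ### Protocols and their information cost -/

lemma IsDist2.isDist {X Y : Type} [Fintype X] [Fintype Y] {μ : X → Y → ℝ} (hμ : IsDist2 μ) :
    IsDist (Function.uncurry μ) :=
  ⟨fun ω => hμ.1 ω.1 ω.2, Fintype.sum_prod_type _ |>.trans hμ.2⟩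

lemma uncurry_nonneg {X Y : Type} {μ : X → Y → ℝ} (hμ : ∀ x y, 0 ≤ μ x y) (ω : X × Y) :
    0 ≤ Function.uncurry μ ω :=
  hμ ω.1 ω.2

namespace Protocol

variable {X Y : Type}

/-- The protocol in which Alice compares her input with the elements of a list one by one and, at
the first match, Bob announces the value of `f`. -/
noncomputable def bruteForce (f : X → Y → Bool) : List X → Protocol X Y
  | [] => leaf false
  | a :: l =>
    nodeA (fun x => decide (x = a)) (bruteForce f l) (nodeB (f a) (leaf false) (leaf true))

lemma eval_bruteForce (f : X → Y → Bool) {l : List X} {x : X} (hx : x ∈ l) (y : Y) :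
    (bruteForce f l).eval x y = f x y := by
  induction l with
  | nil => simp at hx
  | cons a l ih =>
    by_cases h : x = a
    · subst h
      cases hf : f x y <;> simp [bruteForce, eval, hf]
    · simp [bruteForce, eval, h, ih ((List.mem_cons.1 hx).resolve_left h)]

/-- Sequential composition: run a protocol, and then one chosen by its output. -/
def bind : Protocol X Y → (Bool → Protocol X Y) → Protocol X Y
  | leaf b, q => q b
  | nodeA g t₀ t₁, q => nodeA g (bind t₀ q) (bind t₁ q)
  | nodeB g t₀ t₁, q => nodeB g (bind t₀ q) (bind t₁ q)

lemma eval_bind (P : Protocol X Y) (q : Bool → Protocol X Y) (x : X) (y : Y) :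
    (P.bind q).eval x y = (q (P.eval x y)).eval x y := by
  induction P with
  | leaf b => rfl
  | nodeA g t₀ t₁ h₀ h₁ => by_cases h : g x <;> simp [bind, eval, h, h₀, h₁]
  | nodeB g t₀ t₁ h₀ h₁ => by_cases h : g y <;> simp [bind, eval, h, h₀, h₁]

lemma transcript_bind (P : Protocol X Y) (q : Bool → Protocol X Y) (x : X) (y : Y) :
    (P.bind q).transcript x y = P.transcript x y ++ (q (P.eval x y)).transcript x y := by
  induction P with
  | leaf b => rfl
  | nodeA g t₀ t₁ h₀ h₁ => by_cases h : g x <;> simp [bind, eval, transcript, h, h₀, h₁]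
  | nodeB g t₀ t₁ h₀ h₁ => by_cases h : g y <;> simp [bind, eval, transcript, h, h₀, h₁]

/-- Run the protocols of a list one after the other and output `g` of the list of their outputs. -/
def runAll : List (Protocol X Y) → (List Bool → Bool) → Protocol X Y
  | [], g => leaf (g [])
  | P :: l, g => P.bind fun b => runAll l fun o => g (b :: o)

lemma eval_runAll (l : List (Protocol X Y)) (g : List Bool → Bool) (x : X) (y : Y) :
    (runAll l g).eval x y = g (l.map fun P => P.eval x y) := by
  induction l generalizing g with
  | nil => rfl
  | cons P l ih => simp [runAll, eval_bind, ih]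

lemma transcript_runAll (l : List (Protocol X Y)) (g : List Bool → Bool) (x : X) (y : Y) :
    (runAll l g).transcript x y = (l.map fun P => P.transcript x y).flatten := by
  induction l generalizing g with
  | nil => rfl
  | cons P l ih => simp [runAll, transcript_bind, ih]

variable [Fintype X] [Fintype Y] {μ : X → Y → ℝ}

/-- The information cost `H(T | Y) + H(T | X)` of a deterministic protocol with transcript `T`. -/
noncomputable def cost (μ : X → Y → ℝ) (P : Protocol X Y) : ℝ :=
  condEnt (Function.uncurry μ) (fun ω => P.transcript ω.1 ω.2) Prod.snd +
    condEnt (Function.uncurry μ) (fun ω => P.transcript ω.1 ω.2) Prod.fst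

lemma cost_nonneg (hμ : ∀ x y, 0 ≤ μ x y) (P : Protocol X Y) : 0 ≤ P.cost μ :=
  add_nonneg (condEnt_nonneg (uncurry_nonneg hμ) _ _) (condEnt_nonneg (uncurry_nonneg hμ) _ _)

lemma mul_cost_le_cost (hμ : ∀ x y, 0 ≤ μ x y) {ν : X → Y → ℝ} {t : ℝ} (ht : 0 < t)
    (h : ∀ x y, t * μ x y ≤ ν x y) (P : Protocol X Y) : t * P.cost μ ≤ P.cost ν := by
  have h' : ∀ ω, t * Function.uncurry μ ω ≤ Function.uncurry ν ω := fun ω => h ω.1 ω.2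
  rw [cost, mul_add]
  exact add_le_add (mul_condEnt_le_condEnt (uncurry_nonneg hμ) ht h' _ _)
    (mul_condEnt_le_condEnt (uncurry_nonneg hμ) ht h' _ _)

lemma cost_runAll_le (hμ : ∀ x y, 0 ≤ μ x y) (l : List (Protocol X Y)) (g : List Bool → Bool) :
    (runAll l g).cost μ ≤ (l.map (cost μ)).sum := by
  have hEnt : ∀ {γ : Type} (C : X × Y → γ),
      condEnt (Function.uncurry μ) (fun ω => (runAll l g).transcript ω.1 ω.2) C ≤
        (l.map fun P => condEnt (Function.uncurry μ) (fun ω => P.transcript ω.1 ω.2) C).sum := by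
    intro γ C
    simpa only [transcript_runAll, List.map_map, Function.comp_def] using
      condEnt_flatten_le (uncurry_nonneg hμ)
        (l.map fun P (ω : X × Y) => P.transcript ω.1 ω.2) C
  calc (runAll l g).cost μ ≤ _ := add_le_add (hEnt Prod.snd) (hEnt Prod.fst)
    _ = (l.map (cost μ)).sum := List.sum_map_add.symm

lemma exists_forall_cost_le (P : Protocol X Y) :
    ∃ K : ℝ, ∀ μ : X → Y → ℝ, IsDist2 μ → P.cost μ ≤ K := by
  let S := Finset.univ.image fun ω : X × Y => P.transcript ω.1 ω.2
  have hS : ∀ ω : X × Y, P.transcript ω.1 ω.2 ∈ S := fun ω =>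
    Finset.mem_image_of_mem _ (Finset.mem_univ ω)
  exact ⟨Real.logb 2 S.card + Real.logb 2 S.card, fun μ hμ =>
    add_le_add (condEnt_le_logb_card hμ.isDist Prod.snd hS)
      (condEnt_le_logb_card hμ.isDist Prod.fst hS)⟩

end Protocol

/-- A public-coin protocol, encoded as in the definition of `ICmu`: a distribution on finitely many
deterministic protocols. -/
structure PublicCoin (X Y : Type) where
  numCoins : ℕ
  weight : Fin numCoins → ℝ
  run : Fin numCoins → Protocol X Y
  isDist : IsDist weight

namespace PublicCoin

variable {X Y : Type}

/-- The expectation of a quantity attached to the deterministic protocol that is run. -/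
def expect (π : PublicCoin X Y) (F : Protocol X Y → ℝ) : ℝ :=
  ∑ r, π.weight r * F (π.run r)

/-- The public-coin protocol running `P i` with probability `ρ i`, for an arbitrary finite set of
coins. -/
noncomputable def ofWeights {ι : Type} [Fintype ι] (ρ : ι → ℝ) (hρ : IsDist ρ)
    (P : ι → Protocol X Y) : PublicCoin X Y where
  numCoins := Fintype.card ι
  weight r := ρ ((Fintype.equivFin ι).symm r)
  run r := P ((Fintype.equivFin ι).symm r)
  isDist := ⟨fun _ => hρ.1 _, ((Fintype.equivFin ι).symm.sum_comp ρ).trans hρ.2⟩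

lemma expect_ofWeights {ι : Type} [Fintype ι] {ρ : ι → ℝ} (hρ : IsDist ρ)
    (P : ι → Protocol X Y) (F : Protocol X Y → ℝ) :
    (ofWeights ρ hρ P).expect F = ∑ i, ρ i * F (P i) :=
  (Fintype.equivFin ι).symm.sum_comp fun i => ρ i * F (P i)

/-- The public-coin protocol that ignores its coins and runs `P`. -/
noncomputable def ofProtocol (P : Protocol X Y) : PublicCoin X Y where
  numCoins := 1
  weight _ := 1
  run _ := P
  isDist := ⟨fun _ => zero_le_one, by simp⟩

lemma expect_ofProtocol (P : Protocol X Y) (F : Protocol X Y → ℝ) :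
    (ofProtocol P).expect F = F P :=
  (Fin.sum_univ_one _).trans (one_mul _)

lemma expect_mono (π : PublicCoin X Y) {F G : Protocol X Y → ℝ} (h : ∀ P, F P ≤ G P) :
    π.expect F ≤ π.expect G :=
  Finset.sum_le_sum fun r _ => mul_le_mul_of_nonneg_left (h _) (π.isDist.1 r)

lemma expect_nonneg (π : PublicCoin X Y) {F : Protocol X Y → ℝ} (h : ∀ P, 0 ≤ F P) :
    0 ≤ π.expect F :=
  Finset.sum_nonneg fun r _ => mul_nonneg (π.isDist.1 r) (h _)

lemma expect_const_mul (π : PublicCoin X Y) (a : ℝ) (F : Protocol X Y → ℝ) :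
    π.expect (fun P => a * F P) = a * π.expect F := by
  simp only [expect, Finset.mul_sum, mul_left_comm]

lemma expect_const_add (π : PublicCoin X Y) (a : ℝ) (F : Protocol X Y → ℝ) :
    π.expect (fun P => a + F P) = a + π.expect F := by
  simp only [expect, mul_add, Finset.sum_add_distrib, ← Finset.sum_mul, π.isDist.2, one_mul]

lemma exists_expect_eq_convexComb (π σ : PublicCoin X Y) {a b : ℝ} (ha : 0 ≤ a) (hb : 0 ≤ b)
    (hab : a + b = 1) :
    ∃ M : PublicCoin X Y, ∀ F, M.expect F = a * π.expect F + b * σ.expect F := by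
  have hρ : IsDist (Sum.elim (a • π.weight) (b • σ.weight)) := by
    refine ⟨?_, ?_⟩
    · rintro (r | r)
      · exact mul_nonneg ha (π.isDist.1 r)
      · exact mul_nonneg hb (σ.isDist.1 r)
    · simp [← Finset.mul_sum, π.isDist.2, σ.isDist.2, hab]
  refine ⟨ofWeights _ hρ (Sum.elim π.run σ.run), fun F => ?_⟩
  rw [expect_ofWeights]
  simp [expect, Finset.mul_sum, mul_assoc]

/-- The probability that a public-coin protocol errs on the input `ω`. -/
noncomputable def errAt (π : PublicCoin X Y) (f : X → Y → Bool) (ω : X × Y) : ℝ :=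
  π.expect fun P => if P.eval ω.1 ω.2 ≠ f ω.1 ω.2 then 1 else 0

lemma errAt_nonneg (π : PublicCoin X Y) (f : X → Y → Bool) (ω : X × Y) : 0 ≤ π.errAt f ω :=
  π.expect_nonneg fun P => by split_ifs <;> norm_num

lemma errAt_ofProtocol_bruteForce [Fintype X] (f : X → Y → Bool) (ω : X × Y) :
    (ofProtocol (Protocol.bruteForce f Finset.univ.toList)).errAt f ω = 0 := by
  have hmem : ω.1 ∈ Finset.univ.toList := Finset.mem_toList.2 (Finset.mem_univ ω.1)
  rw [errAt, expect_ofProtocol, Protocol.eval_bruteForce f hmem ω.2, if_neg (not_not.2 rfl)]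

variable [Fintype X] [Fintype Y] {μ : X → Y → ℝ}

lemma sum_mul_errAt_ofProtocol_bruteForce (μ : X → Y → ℝ) (f : X → Y → Bool) :
    ∑ ω, Function.uncurry μ ω *
      (ofProtocol (Protocol.bruteForce f Finset.univ.toList)).errAt f ω = 0 :=
  Finset.sum_eq_zero fun ω _ => by rw [errAt_ofProtocol_bruteForce, mul_zero]

lemma randErr_eq_sum_errAt (μ : X → Y → ℝ) (f : X → Y → Bool) (π : PublicCoin X Y) :
    randErr μ f π.weight π.run = ∑ ω, Function.uncurry μ ω * π.errAt f ω := by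
  simp only [randErr, errAt, expect, Fintype.sum_prod_type, Finset.mul_sum, mul_ite, mul_one,
    mul_zero, Function.uncurry_apply_pair]

lemma infoCost_eq_expect_cost (hμ : IsDist2 μ) (π : PublicCoin X Y) :
    infoCost μ π.weight π.run = π.expect (Protocol.cost μ) := by
  let e := Equiv.prodAssoc X Y (Fin π.numCoins)
  have hA := condMI_coin_eq_sum_condEnt hμ.isDist π.isDist (A := Prod.fst) (C := Prod.snd)
    Function.injective_id fun r ω => (π.run r).transcript ω.1 ω.2
  have hB := condMI_coin_eq_sum_condEnt hμ.isDist π.isDist (A := Prod.snd) (C := Prod.fst)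
    Prod.swap_injective fun r ω => (π.run r).transcript ω.1 ω.2
  rw [infoCost, ← condMI_comp_equiv e, ← condMI_comp_equiv e]
  simp only [expect, Protocol.cost, mul_add, Finset.sum_add_distrib]
  exact congrArg₂ (· + ·) hA hB

lemma ICmu_eq_sInf_image (hμ : IsDist2 μ) (f : X → Y → Bool) (ε : ℝ) :
    ICmu μ f ε = sInf ((fun π : PublicCoin X Y => π.expect (Protocol.cost μ)) ''
      {π | ∑ ω, Function.uncurry μ ω * π.errAt f ω ≤ ε}) := by
  refine congrArg sInf (Set.ext fun c => ⟨?_, ?_⟩)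
  · rintro ⟨m, ρ, P, hρ, hP, rfl⟩
    let π : PublicCoin X Y := ⟨m, ρ, P, hρ⟩
    exact ⟨π, (randErr_eq_sum_errAt μ f π).symm.trans_le hP, (infoCost_eq_expect_cost hμ π).symm⟩
  · rintro ⟨π, hπ, rfl⟩
    exact ⟨_, _, _, π.isDist, (randErr_eq_sum_errAt μ f π).trans_le hπ,
      (infoCost_eq_expect_cost hμ π).symm⟩

lemma expect_cost_nonneg (hμ : IsDist2 μ) (π : PublicCoin X Y) :
    0 ≤ π.expect (Protocol.cost μ) :=
  π.expect_nonneg (Protocol.cost_nonneg hμ.1)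

lemma ICmu_nonneg (hμ : IsDist2 μ) (f : X → Y → Bool) (ε : ℝ) : 0 ≤ ICmu μ f ε := by
  rw [ICmu_eq_sInf_image hμ]
  exact Real.sInf_nonneg (Set.forall_mem_image.2 fun π _ => expect_cost_nonneg hμ π)

lemma ICmu_le_expect_cost (hμ : IsDist2 μ) {f : X → Y → Bool} {ε : ℝ} (π : PublicCoin X Y)
    (h : ∑ ω, Function.uncurry μ ω * π.errAt f ω ≤ ε) :
    ICmu μ f ε ≤ π.expect (Protocol.cost μ) := by
  rw [ICmu_eq_sInf_image hμ]
  exact csInf_le ⟨0, Set.forall_mem_image.2 fun σ _ => expect_cost_nonneg hμ σ⟩ ⟨π, h, rfl⟩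

lemma exists_expect_cost_lt_of_ICmu_lt (hμ : IsDist2 μ) {f : X → Y → Bool} {ε c : ℝ} (hε : 0 ≤ ε)
    (hc : ICmu μ f ε < c) :
    ∃ π : PublicCoin X Y,
      ∑ ω, Function.uncurry μ ω * π.errAt f ω ≤ ε ∧ π.expect (Protocol.cost μ) < c := by
  have hne : {π : PublicCoin X Y | ∑ ω, Function.uncurry μ ω * π.errAt f ω ≤ ε}.Nonempty :=
    ⟨_, (sum_mul_errAt_ofProtocol_bruteForce μ f).trans_le hε⟩
  rw [ICmu_eq_sInf_image hμ] at hc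
  obtain ⟨-, ⟨π, hπ, rfl⟩, hlt⟩ := exists_lt_of_csInf_lt (hne.image _) hc
  exact ⟨π, hπ, hlt⟩

lemma IC_nonneg (f : X → Y → Bool) (ε : ℝ) : 0 ≤ IC f ε := by
  refine Real.sSup_nonneg ?_
  rintro _ ⟨μ, hμ, rfl⟩
  exact ICmu_nonneg hμ f ε

lemma ICmu_le_IC (hμ : IsDist2 μ) (f : X → Y → Bool) {ε : ℝ} (hε : 0 ≤ ε) :
    ICmu μ f ε ≤ IC f ε := by
  let P := Protocol.bruteForce f Finset.univ.toList
  obtain ⟨K, hK⟩ := P.exists_forall_cost_le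
  refine le_csSup ⟨K, ?_⟩ ⟨μ, hμ, rfl⟩
  rintro _ ⟨ν, hν, rfl⟩
  calc ICmu ν f ε ≤ (ofProtocol P).expect (Protocol.cost ν) :=
        ICmu_le_expect_cost hν _ ((sum_mul_errAt_ofProtocol_bruteForce ν f).trans_le hε)
    _ ≤ K := (expect_ofProtocol P _).trans_le (hK ν hν)

end PublicCoin

/-! ### Amplification by majority vote -/

/-- The majority value of a list of bits, ties going to `true`. -/
def majority (l : List Bool) : Bool :=
  decide (l.count false ≤ l.count true)

lemma count_le_count_not_of_majority_ne {l : List Bool} {z : Bool} (h : majority l ≠ z) :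
    l.count z ≤ l.count !z := by
  cases z
  · simpa [majority] using h
  · exact (not_le.1 (by simpa [majority] using h)).le

lemma prod_map_ite_mul_pow_count {a : ℝ} (ha : a ≠ 0) (l : List Bool) (z : Bool) :
    (l.map fun b => if b ≠ z then a else a⁻¹).prod * a ^ l.count z = a ^ l.count !z := by
  induction l with
  | nil => simp
  | cons b l ih =>
    rcases Bool.eq_or_eq_not b z with rfl | rfl
    · rw [List.count_cons_of_ne (Bool.self_ne_not b), ← ih]
      simp only [List.map_cons, List.prod_cons, List.count_cons_self, ne_eq, not_true_eq_false,
        if_false, pow_succ]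
      field_simp
    · rw [List.count_cons_of_ne (Bool.not_ne_self z), List.count_cons_self, pow_succ, ← ih]
      simp [mul_comm, mul_left_comm]

lemma one_le_prod_of_majority_ne {a : ℝ} (ha : 1 ≤ a) {l : List Bool} {z : Bool}
    (h : majority l ≠ z) : 1 ≤ (l.map fun b => if b ≠ z then a else a⁻¹).prod := by
  have ha₀ : 0 < a := zero_lt_one.trans_le ha
  refine le_of_mul_le_mul_right ?_ (pow_pos ha₀ (l.count z))
  rw [one_mul, prod_map_ite_mul_pow_count ha₀.ne']
  exact pow_le_pow_right₀ ha (count_le_count_not_of_majority_ne h)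

section Product

variable {ι : Type} [Fintype ι] {ρ : ι → ℝ}

lemma IsDist.pi (hρ : IsDist ρ) (k : ℕ) : IsDist fun r : Fin k → ι => ∏ i, ρ (r i) :=
  ⟨fun _ => Finset.prod_nonneg fun _ _ => hρ.1 _, by rw [← Fintype.sum_pow, hρ.2, one_pow]⟩

lemma IsDist.sum_pi_mul (hρ : IsDist ρ) {k : ℕ} (i : Fin k) (F : ι → ℝ) :
    ∑ r : Fin k → ι, (∏ j, ρ (r j)) * F (r i) = ∑ a, ρ a * F a := by
  have hterm : ∀ r : Fin k → ι, (∏ j, ρ (r j)) * F (r i) =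
      ∏ j, ρ (r j) * if j = i then F (r j) else 1 := fun r => by
    rw [Finset.prod_mul_distrib, Finset.prod_ite_eq' Finset.univ i, if_pos (Finset.mem_univ i)]
  have hfactor : ∀ j, (∑ a, ρ a * if j = i then F a else 1) =
      if j = i then ∑ a, ρ a * F a else 1 := fun j => by
    split_ifs <;> simp [hρ.2]
  simp only [hterm]
  rw [← Fintype.prod_sum fun j a => ρ a * if j = i then F a else 1]
  simp only [hfactor, Finset.prod_ite_eq', Finset.mem_univ, if_true]

end Product

namespace PublicCoin

variable {X Y : Type}

/-- Run `k` independent copies of a public-coin protocol and output the majority value. -/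
noncomputable def majorityVote (π : PublicCoin X Y) (k : ℕ) : PublicCoin X Y :=
  ofWeights _ (π.isDist.pi k) fun r =>
    Protocol.runAll (List.ofFn fun i => π.run (r i)) majority

lemma expect_cost_majorityVote_le [Fintype X] [Fintype Y] {μ : X → Y → ℝ}
    (hμ : ∀ x y, 0 ≤ μ x y) (π : PublicCoin X Y) (k : ℕ) :
    (π.majorityVote k).expect (Protocol.cost μ) ≤ k * π.expect (Protocol.cost μ) := by
  calc (π.majorityVote k).expect (Protocol.cost μ)
      ≤ ∑ r : Fin k → Fin π.numCoins,
          (∏ j, π.weight (r j)) * ∑ i, (π.run (r i)).cost μ := by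
        rw [majorityVote, expect_ofWeights]
        refine Finset.sum_le_sum fun r _ =>
          mul_le_mul_of_nonneg_left ?_ ((π.isDist.pi k).1 r)
        simpa only [List.map_ofFn, List.sum_ofFn, Function.comp_apply] using
          Protocol.cost_runAll_le hμ (List.ofFn fun i => π.run (r i)) majority
    _ = ∑ _i : Fin k, π.expect (Protocol.cost μ) := by
        simp only [Finset.mul_sum]
        rw [Finset.sum_comm]
        exact Finset.sum_congr rfl fun i _ => π.isDist.sum_pi_mul i fun r => (π.run r).cost μ
    _ = k * π.expect (Protocol.cost μ) := by simp

/-- Chernoff's bound: each wrong answer is weighted by `a` and each right one by `a⁻¹`. -/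
lemma errAt_majorityVote_le (π : PublicCoin X Y) (f : X → Y → Bool) (ω : X × Y) {a : ℝ}
    (ha : 1 ≤ a) (k : ℕ) :
    (π.majorityVote k).errAt f ω ≤ (a⁻¹ + (a - a⁻¹) * π.errAt f ω) ^ k := by
  let F : Protocol X Y → ℝ := fun P => if P.eval ω.1 ω.2 ≠ f ω.1 ω.2 then a else a⁻¹
  have hF : π.expect F = a⁻¹ + (a - a⁻¹) * π.errAt f ω := by
    rw [errAt, ← expect_const_mul, ← expect_const_add]
    exact congrArg π.expect <| funext fun P => by simp only [F]; split_ifs <;> ring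
  have hF₀ : ∀ P, 0 ≤ F P := fun P => by
    simp only [F]
    split_ifs <;> positivity
  rw [← hF, expect, Fintype.sum_pow, errAt, majorityVote, expect_ofWeights]
  refine Finset.sum_le_sum fun r _ => ?_
  rw [Finset.prod_mul_distrib]
  refine mul_le_mul_of_nonneg_left ?_ ((π.isDist.pi k).1 r)
  split_ifs with h
  · rw [Protocol.eval_runAll] at h
    simpa [F, List.prod_ofFn, Function.comp_def] using one_le_prod_of_majority_ne ha h
  · exact Finset.prod_nonneg fun i _ => hF₀ _

lemma errAt_majorityVote_le_pow (π : PublicCoin X Y) {f : X → Y → Bool} {ω : X × Y} {η : ℝ}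
    (hη₀ : 0 < η) (hη : η ≤ 1 / 2) (h : π.errAt f ω ≤ η) (k : ℕ) :
    (π.majorityVote k).errAt f ω ≤ (1 / 2 + 2 * η * (1 - η)) ^ k := by
  have ha : 1 ≤ (2 * η)⁻¹ := (one_le_inv₀ (by positivity)).2 (by linarith)
  have hdiff : 0 ≤ (2 * η)⁻¹ - (2 * η)⁻¹⁻¹ := by
    rw [inv_inv]
    linarith
  calc (π.majorityVote k).errAt f ω
      ≤ ((2 * η)⁻¹⁻¹ + ((2 * η)⁻¹ - (2 * η)⁻¹⁻¹) * π.errAt f ω) ^ k :=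
        errAt_majorityVote_le π f ω ha k
    _ ≤ ((2 * η)⁻¹⁻¹ + ((2 * η)⁻¹ - (2 * η)⁻¹⁻¹) * η) ^ k :=
        pow_le_pow_left₀ (add_nonneg (by positivity) (mul_nonneg hdiff (π.errAt_nonneg f ω)))
          (by gcongr) k
    _ = (1 / 2 + 2 * η * (1 - η)) ^ k := by
        congr 1
        field_simp
        ring

end PublicCoin

/-! ### The minimax argument -/

section Minimax

variable {ι : Type*} [Fintype ι] {K : Set (ι → ℝ)} {s t : ℝ}

/-- A functional separating `K` from the orthant `{v | ∀ i, v i < t}` has nonnegative coefficients,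
because the orthant is unbounded below in each coordinate. -/
lemma exists_mem_stdSimplex_forall_le_sum (hK : Convex ℝ K) (hne : K.Nonempty)
    (h : ∀ v ∈ K, ∃ i, t ≤ v i) : ∃ w ∈ stdSimplex ℝ ι, ∀ v ∈ K, t ≤ ∑ i, w i * v i := by
  have hdisj : Disjoint (Set.univ.pi fun _ : ι => Set.Iio t) K :=
    Set.disjoint_left.2 fun v hv hvK =>
      let ⟨i, hi⟩ := h v hvK
      hi.not_gt (hv i trivial)
  obtain ⟨g, u, hlt, hle⟩ := geometric_hahn_banach_open (convex_pi fun _ _ => convex_Iio t)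
    (isOpen_set_pi Set.finite_univ fun _ _ => isOpen_Iio) hK hdisj
  let w : ι → ℝ := fun i => g (Pi.single i 1)
  have hg : ∀ v, g v = ∑ i, w i * v i := fun v => by
    conv_lhs => rw [pi_eq_sum_univ' v]
    simp [w, mul_comm]
  have hconst : ∀ r < t, r * ∑ i, w i < u := fun r hr => by
    simpa only [hg, ← Finset.sum_mul, mul_comm r] using hlt (fun _ => r) fun _ _ => hr
  have hw : ∀ i, 0 ≤ w i := by
    intro i
    by_contra! hi
    let v : ι → ℝ := fun _ => t - 1
    have hv : g v < u := hlt v fun _ _ => sub_one_lt t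
    let r := (g v - u) / w i
    have hr : 0 ≤ r := div_nonneg_of_nonpos (sub_nonpos.2 hv.le) hi.le
    have hsingle : (0 : ι → ℝ) ≤ Pi.single i 1 := Pi.single_nonneg.2 zero_le_one
    have hgr : g (v - r • Pi.single i 1) = u := by
      rw [map_sub, map_smul, smul_eq_mul, div_mul_cancel₀ _ hi.ne, sub_sub_cancel]
    exact (hlt _ fun j _ => (sub_le_self (t - 1) (mul_nonneg hr (hsingle j))).trans_lt
      (sub_one_lt t)).ne hgr
  have hW : 0 < ∑ i, w i := by
    refine (Finset.sum_nonneg fun i _ => hw i).lt_of_ne' fun hW => ?_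
    have hw₀ : ∀ i, w i = 0 := by
      simpa using (Finset.sum_eq_zero_iff_of_nonneg fun i _ => hw i).1 hW
    obtain ⟨v, hv⟩ := hne
    have hu₀ : u ≤ 0 := by simpa [hg, hw₀] using hle v hv
    have hu₁ : 0 < u := by simpa [hW] using hconst (t - 1) (sub_one_lt t)
    exact hu₀.not_gt hu₁
  refine ⟨fun i => w i / ∑ j, w j, ⟨fun i => div_nonneg (hw i) hW.le, ?_⟩, fun v hv => ?_⟩
  · rw [← Finset.sum_div, div_self hW.ne']
  · simp only [div_mul_eq_mul_div, ← Finset.sum_div, ← hg]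
    exact le_of_forall_lt fun r hr => (lt_div_iff₀ hW).2 ((hconst r hr).trans_le (hle v hv))

theorem exists_mem_forall_le_of_forall_stdSimplex (hK : Convex ℝ K) (hne : K.Nonempty)
    (hst : s < t) (h : ∀ w ∈ stdSimplex ℝ ι, ∃ v ∈ K, ∑ i, w i * v i ≤ s) :
    ∃ v ∈ K, ∀ i, v i ≤ t := by
  by_contra! hcon
  obtain ⟨w, hw, hwt⟩ :=
    exists_mem_stdSimplex_forall_le_sum hK hne fun v hv => (hcon v hv).imp fun _ => le_of_lt
  obtain ⟨v, hv, hvs⟩ := h w hw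
  exact ((hwt v hv).trans hvs).not_gt hst

end Minimax

namespace PublicCoin

variable {X Y : Type} [Fintype X] [Fintype Y] {μ : X → Y → ℝ} {f : X → Y → Bool} {ε t η c : ℝ}

lemma convex_errAt_image (μ : X → Y → ℝ) (f : X → Y → Bool) (t c : ℝ) :
    Convex ℝ ((fun π : PublicCoin X Y => π.errAt f) ''
      {π | t * π.expect (Protocol.cost μ) ≤ c}) := by
  rintro _ ⟨π, hπ, rfl⟩ _ ⟨σ, hσ, rfl⟩ a b ha hb hab
  obtain ⟨M, hM⟩ := exists_expect_eq_convexComb π σ ha hb hab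
  refine ⟨M, ?_, funext fun ω => hM _⟩
  calc t * M.expect (Protocol.cost μ)
      = a * (t * π.expect (Protocol.cost μ)) + b * (t * σ.expect (Protocol.cost μ)) := by
        rw [hM]
        ring
    _ ≤ a * c + b * c := by
        gcongr
        exacts [hπ, hσ]
    _ = c := by rw [← add_mul, hab, one_mul]

/-- Apply the definition of `IC` to the mixture `t * μ + (1 - t) * w`: its cost controls the cost
under `μ` and its error controls the error under `w`. -/
lemma exists_cost_le_and_sum_errAt_le (hε : 0 ≤ ε) (ht₀ : 0 < t) (ht₁ : t < 1) (hμ : IsDist2 μ)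
    (hc : IC f ε < c) {w : X × Y → ℝ} (hw : w ∈ stdSimplex ℝ (X × Y)) :
    ∃ π : PublicCoin X Y,
      t * π.expect (Protocol.cost μ) ≤ c ∧ ∑ ω, w ω * π.errAt f ω ≤ ε / (1 - t) := by
  have ht : 0 < 1 - t := sub_pos.2 ht₁
  let ν : X → Y → ℝ := fun x y => t * μ x y + (1 - t) * w (x, y)
  have hν₀ : ∀ x y, t * μ x y ≤ ν x y := fun x y =>
    le_add_of_nonneg_right (mul_nonneg ht.le (hw.1 _))
  have hν : IsDist2 ν := by
    refine ⟨fun x y => (mul_nonneg ht₀.le (hμ.1 x y)).trans (hν₀ x y), ?_⟩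
    have hw₁ : ∑ x, ∑ y, w (x, y) = 1 := (Fintype.sum_prod_type _).symm.trans hw.2
    simp [ν, Finset.sum_add_distrib, ← Finset.mul_sum, hμ.2, hw₁]
  obtain ⟨π, herr, hcost⟩ :=
    exists_expect_cost_lt_of_ICmu_lt hν hε ((ICmu_le_IC hν f hε).trans_lt hc)
  refine ⟨π, ?_, ?_⟩
  · rw [← expect_const_mul]
    exact (π.expect_mono (Protocol.mul_cost_le_cost hμ.1 ht₀ hν₀)).trans hcost.le
  · rw [le_div_iff₀' ht, Finset.mul_sum]
    refine (Finset.sum_le_sum fun ω _ => ?_).trans herr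
    rw [← mul_assoc]
    refine mul_le_mul_of_nonneg_right ?_ (π.errAt_nonneg f ω)
    exact le_add_of_nonneg_left (mul_nonneg ht₀.le (hμ.1 _ _))

lemma exists_cost_le_and_errAt_le (hε : 0 ≤ ε) (ht₀ : 0 < t) (ht₁ : t < 1)
    (hη : ε / (1 - t) < η) (hμ : IsDist2 μ) (hc : IC f ε < c) :
    ∃ π : PublicCoin X Y,
      t * π.expect (Protocol.cost μ) ≤ c ∧ ∀ ω, π.errAt f ω ≤ η := by
  have hne : {π : PublicCoin X Y | t * π.expect (Protocol.cost μ) ≤ c}.Nonempty :=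
    (exists_cost_le_and_sum_errAt_le hε ht₀ ht₁ hμ hc hμ.isDist).imp fun _ => And.left
  obtain ⟨-, ⟨π, hπ, rfl⟩, herr⟩ := exists_mem_forall_le_of_forall_stdSimplex
    (convex_errAt_image μ f t c) (hne.image _) hη fun w hw =>
      let ⟨π, hπ, hw⟩ := exists_cost_le_and_sum_errAt_le hε ht₀ ht₁ hμ hc hw
      ⟨_, ⟨π, hπ, rfl⟩, hw⟩
  exact ⟨π, hπ, herr⟩

end PublicCoin

/-! ### Error reduction -/

section ErrorReduction

variable {X Y : Type} [Fintype X] [Fintype Y] {f : X → Y → Bool} {ε δ t η : ℝ} {k : ℕ}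

lemma ICmu_le_of_pow_le {μ : X → Y → ℝ} (hμ : IsDist2 μ) {c : ℝ} (hε : 0 ≤ ε) (ht₀ : 0 < t)
    (ht₁ : t < 1) (hη₀ : ε / (1 - t) < η) (hη : η ≤ 1 / 2)
    (hk : (1 / 2 + 2 * η * (1 - η)) ^ k ≤ δ) (hc : IC f ε < c) : ICmu μ f δ ≤ k / t * c := by
  have hη_pos : 0 < η := (div_nonneg hε (sub_pos.2 ht₁).le).trans_lt hη₀
  obtain ⟨π, hcost, herr⟩ := PublicCoin.exists_cost_le_and_errAt_le hε ht₀ ht₁ hη₀ hμ hc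
  have hvote : ∑ ω, Function.uncurry μ ω * (π.majorityVote k).errAt f ω ≤ δ :=
    calc _ ≤ ∑ ω, Function.uncurry μ ω * δ := Finset.sum_le_sum fun ω _ =>
          mul_le_mul_of_nonneg_left ((π.errAt_majorityVote_le_pow hη_pos hη (herr ω) k).trans hk)
            (hμ.isDist.1 ω)
      _ = δ := by rw [← Finset.sum_mul, hμ.isDist.2, one_mul]
  calc ICmu μ f δ ≤ (π.majorityVote k).expect (Protocol.cost μ) :=
        PublicCoin.ICmu_le_expect_cost hμ _ hvote
    _ ≤ k * π.expect (Protocol.cost μ) := PublicCoin.expect_cost_majorityVote_le hμ.1 π k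
    _ ≤ k * (c / t) := by
        gcongr
        exact (le_div_iff₀' ht₀).2 hcost
    _ = k / t * c := by rw [mul_div_assoc', div_mul_eq_mul_div]

lemma IC_le_of_pow_le (f : X → Y → Bool) (hε : 0 ≤ ε) (ht₀ : 0 < t) (ht₁ : t < 1)
    (hη₀ : ε / (1 - t) < η) (hη : η ≤ 1 / 2) (hk : (1 / 2 + 2 * η * (1 - η)) ^ k ≤ δ) :
    IC f δ ≤ k / t * IC f ε := by
  have hIC : 0 ≤ IC f ε := PublicCoin.IC_nonneg f ε
  refine Real.sSup_le ?_ (by positivity)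
  rintro _ ⟨μ, hμ, rfl⟩
  have hlim : Filter.Tendsto (fun c => k / t * c) (nhdsWithin (IC f ε) (Set.Ioi (IC f ε)))
      (nhds (k / t * IC f ε)) :=
    (continuous_const_mul (k / t)).continuousWithinAt
  exact ge_of_tendsto hlim <| eventually_nhdsWithin_of_forall fun c hc =>
    ICmu_le_of_pow_le hμ hε ht₀ ht₁ hη₀ hη hk hc

lemma exists_pow_le_and_le_mul_logb {q : ℝ} (hq₀ : 0 < q) (hq₁ : q < 1) :
    ∃ C : ℝ, 0 < C ∧ ∀ δ ∈ Set.Ioc (0 : ℝ) (1 / 2),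
      ∃ k : ℕ, q ^ k ≤ δ ∧ k ≤ C * Real.logb 2 (1 / δ) := by
  let a := Real.logb 2 (1 / q)
  have ha : 0 < a := Real.logb_pos one_lt_two ((one_lt_div hq₀).2 hq₁)
  refine ⟨1 / a + 1, by positivity, fun δ hδ => ?_⟩
  let L := Real.logb 2 (1 / δ)
  have hL : 1 ≤ L := by
    rw [Real.le_logb_iff_rpow_le one_lt_two (one_div_pos.2 hδ.1), Real.rpow_one,
      le_one_div two_pos hδ.1]
    exact hδ.2
  refine ⟨⌈L / a⌉₊, ?_, ?_⟩
  · have hceil : L ≤ ⌈L / a⌉₊ * a := (div_le_iff₀ ha).1 (Nat.le_ceil _)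
    rw [← Real.logb_le_logb one_lt_two (pow_pos hq₀ _) hδ.1, Real.logb_pow, ← neg_le_neg_iff,
      ← mul_neg, ← Real.logb_inv, ← Real.logb_inv, ← one_div, ← one_div]
    exact hceil
  · calc (⌈L / a⌉₊ : ℝ) ≤ L / a + 1 := (Nat.ceil_lt_add_one (by positivity)).le
      _ ≤ (1 / a + 1) * L := by
          rw [add_mul, one_mul, one_div_mul_eq_div]
          gcongr

theorem IC_error_reduction_general (hε : ε ∈ Set.Ico (0 : ℝ) (1 / 2)) :
    ∃ C : ℝ, 0 < C ∧ ∀ {X Y : Type} [Fintype X] [Fintype Y] (f : X → Y → Bool) (δ : ℝ),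
      δ ∈ Set.Ioc (0 : ℝ) (1 / 2) → IC f δ ≤ C * Real.logb 2 (1 / δ) * IC f ε := by
  obtain ⟨hε₀, hε₁⟩ := hε
  let t := (1 - 2 * ε) / 2
  have ht₀ : 0 < t := half_pos (by linarith)
  have ht₁ : t < 1 := (div_lt_one two_pos).2 (by linarith)
  have hmix : ε / (1 - t) < 1 / 2 := by
    rw [div_lt_iff₀ (sub_pos.2 ht₁)]
    simp only [t]
    linarith
  obtain ⟨η, hη₀, hη⟩ := exists_between hmix
  have hη_pos : 0 < η := (div_nonneg hε₀ (sub_pos.2 ht₁).le).trans_lt hη₀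
  obtain ⟨C, hC, hpow⟩ := exists_pow_le_and_le_mul_logb
    (q := 1 / 2 + 2 * η * (1 - η)) (by nlinarith) (by nlinarith)
  refine ⟨C / t, div_pos hC ht₀, fun f δ hδ => ?_⟩
  obtain ⟨k, hk, hkC⟩ := hpow δ hδ
  calc IC f δ ≤ k / t * IC f ε := IC_le_of_pow_le f hε₀ ht₀ ht₁ hη₀ hη.le hk
    _ ≤ C * Real.logb 2 (1 / δ) / t * IC f ε := by
        have hIC : 0 ≤ IC f ε := PublicCoin.IC_nonneg f ε
        gcongr
    _ = C / t * Real.logb 2 (1 / δ) * IC f ε := by rw [div_mul_eq_mul_div C]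

end ErrorReduction

/-- **Claim B.2 (error reduction for information complexity).** There is a universal
constant `C > 0` such that for every `f : {0,1}ⁿ × {0,1}ⁿ → {0,1}` and `δ ∈ (0,1/8)`,
`IC_δ(f) ≤ C · log(1/δ) · IC_{1/8}(f)`. -/
theorem IC_error_reduction :
    ∃ C : ℝ, 0 < C ∧
      ∀ (n : ℕ) (f : (Fin n → Bool) → (Fin n → Bool) → Bool) (δ : ℝ),
        δ ∈ Set.Ioo (0 : ℝ) (1 / 8) →
        IC f δ ≤ C * Real.logb 2 (1 / δ) * IC f (1 / 8) :=
  let ⟨C, hC, h⟩ := IC_error_reduction_general (ε := 1 / 8) (by norm_num)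
  ⟨C, hC, fun _ f δ hδ => h f δ ⟨hδ.1, by linarith [hδ.2]⟩⟩
end
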